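/- arXiv:math/0012251 — 2 statements merged into one kernel-verified Lean document; each statement's English description precedes it below -/
import Mathlib

section
/- Let R = ℂ[a_1,…,a_m] be graded by positive integer weights w_1,…,w_m, let g ≤ m, let f_1,…,f_{m−g} ∈ R be weighted-homogeneous of positive weighted degrees d_1,…,d_{m−g} such that the Krull dimension of R/(f_1,…,f_{m−g}) is at most g. Let D_1,…,D_g be pairwise commuting ℂ-derivations of R, homogeneous of positive degrees e_1,…,e_g, with D_j f_k = 0 for all j, k. Assume that A_0/(D_1 A_0 + ⋯ + D_g A_0) is finite-dimensional over ℂ, where A_0 = R/(f_1,…,f_{m−g}) (Assumption 1). Then for every point c = (c_1,…,c_{m−g}) ∈ ℂ^{m−g}, setting A_c = R/(f_1 − c_1, …, f_{m−g} − c_{m−g}) with the operators induced by D_1,…,D_g, each cohomology group H^k(C_c^•) of the Koszul-type complex on A_c is finite-dimensional over ℂ, and Σ_{k=0}^g (−1)^k dim_ℂ H^k(C_c^•) = Σ_{k=0}^g (−1)^k dim_ℂ H^k(C_0^•) = (−1)^g · (∏_{j=1}^{m−g} d_j) · (∏_{j=1}^{g} e_j) / (∏_{i=1}^{m} w_i).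 In particular, the Euler characteristic of the complex at a generic point of the parameter space coincides with the Euler characteristic of the complex at the origin. -/
open TensorProduct

noncomputable section

/-- The `k`-th exterior power `Λ^k V` of `V = ℂ^g`, as a submodule of the exterior algebra. -/
def ExtPow (g k : ℕ) : Submodule ℂ (ExteriorAlgebra ℂ (Fin g → ℂ)) := ⋀[ℂ]^k (Fin g → ℂ)

/-- Wedge (on the left) by the `j`-th basis vector `dz_j` of `V = ℂ^g`, as a linear map
`Λ^k V → Λ^{k+1} V`. -/
def wedgeBasis (g k : ℕ) (j : Fin g) : ExtPow g k →ₗ[ℂ] ExtPow g (k + 1) :=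
  LinearMap.codRestrict _
    ((LinearMap.mulLeft ℂ (ExteriorAlgebra.ι ℂ (Pi.single j 1))).comp
      (Submodule.subtype _))
    (fun x => by
      have h1 : ExteriorAlgebra.ι ℂ (Pi.single j (1 : ℂ) : Fin g → ℂ) ∈
          ⋀[ℂ]^1 (Fin g → ℂ) := by
        have h : (⋀[ℂ]^1 (Fin g → ℂ)) =
            LinearMap.range (ExteriorAlgebra.ι ℂ (M := Fin g → ℂ)) := pow_one _
        rw [h]
        exact LinearMap.mem_range_self _ _
      have hx : (x : ExteriorAlgebra ℂ (Fin g → ℂ)) ∈ ⋀[ℂ]^k (Fin g → ℂ) := x.2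
      have := SetLike.mul_mem_graded h1 hx
      show _ ∈ ⋀[ℂ]^(k + 1) (Fin g → ℂ)
      simpa [Nat.add_comm] using this)

variable (M : Type) [AddCommGroup M] [Module ℂ M]

/-- The space of `k`-cochains `C^k = M ⊗ Λ^k V` of the Koszul-type complex. -/
def KCochain (g k : ℕ) : Type := M ⊗[ℂ] ExtPow g k

instance (g k : ℕ) : AddCommGroup (KCochain M g k) :=
  inferInstanceAs (AddCommGroup (M ⊗[ℂ] ExtPow g k))

instance (g k : ℕ) : Module ℂ (KCochain M g k) :=
  inferInstanceAs (Module ℂ (M ⊗[ℂ] ExtPow g k))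

variable {M}

/-- The `k`-th differential `d = Σ_j T_j ⊗ (dz_j ∧ ·) : C^k → C^{k+1}` of the Koszul-type
cochain complex attached to the family of operators `T_j` on `M`. -/
def koszulD (g : ℕ) (T : Fin g → Module.End ℂ M) (k : ℕ) :
    KCochain M g k →ₗ[ℂ] KCochain M g (k + 1) :=
  ∑ j : Fin g, TensorProduct.map (T j) (wedgeBasis g k j)

/-- The differential of the Koszul-type complex arriving at `C^k`: it is `d^{k-1}` for
`k ≥ 1`, and the zero map (from `C^0`) for `k = 0`, so that its range is `0 ⊆ C^0`. -/
def koszulDInto (g : ℕ) (T : Fin g → Module.End ℂ M) :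
    ∀ k : ℕ, KCochain M g (k - 1) →ₗ[ℂ] KCochain M g k
  | 0 => 0
  | k + 1 => koszulD g T k

/-- The `k`-th cohomology `H^k = ker d^k / im d^{k-1}` of the Koszul-type cochain complex
`0 → M → M ⊗ V → ⋯ → M ⊗ Λ^g V → 0`. -/
def KoszulH (g : ℕ) (T : Fin g → Module.End ℂ M) (k : ℕ) : Type :=
  LinearMap.ker (koszulD g T k) ⧸
    Submodule.comap (LinearMap.ker (koszulD g T k)).subtype
      (LinearMap.range (koszulDInto g T k))

instance (g : ℕ) (T : Fin g → Module.End ℂ M) (k : ℕ) : AddCommGroup (KoszulH g T k) :=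
  inferInstanceAs (AddCommGroup (_ ⧸ _))

instance (g : ℕ) (T : Fin g → Module.End ℂ M) (k : ℕ) : Module ℂ (KoszulH g T k) :=
  inferInstanceAs (Module ℂ (_ ⧸ _))


open MvPolynomial


/-! ### Regular sequences relative to an ideal -/

/-- `l` is a (weakly) regular sequence on `A / I`. -/
def RegSeq {A : Type*} [CommRing A] : Ideal A → List A → Prop
  | _, [] => True
  | I, a :: l => (∀ x, a * x ∈ I → x ∈ I) ∧ RegSeq (I ⊔ Ideal.span {a}) l

open Pointwise in
theorem regSeq_iff {A : Type*} [CommRing A] (l : List A) : ∀ I : Ideal A,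
    RingTheory.Sequence.IsWeaklyRegular (A ⧸ I) l ↔ RegSeq I l := by
  induction l with
  | nil => intro I; simp [RegSeq]
  | cons a l ih =>
    intro I
    rw [RingTheory.Sequence.isWeaklyRegular_cons_iff, RegSeq, ← ih,
      isSMulRegular_quotient_iff_mem_of_smul_mem]
    have hmap : (a • (⊤ : Submodule A (A ⧸ I))) = Submodule.map I.mkQ (Ideal.span {a}) := by
      ext y
      simp only [Submodule.mem_smul_pointwise_iff_exists, Submodule.mem_map,
        Ideal.mem_span_singleton]
      constructor
      · rintro ⟨b, -, rfl⟩
        obtain ⟨b, rfl⟩ := Submodule.mkQ_surjective I b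
        exact ⟨a * b, dvd_mul_right _ _, by rw [← smul_eq_mul, map_smul]⟩
      · rintro ⟨y, ⟨c, rfl⟩, rfl⟩
        exact ⟨I.mkQ c, trivial, by rw [← smul_eq_mul, map_smul]⟩
    let eqv : QuotSMulTop a (A ⧸ I) ≃ₗ[A] A ⧸ (I ⊔ Ideal.span {a}) :=
      (Submodule.quotEquivOfEq _ _ hmap).trans
        (Submodule.quotientQuotientEquivQuotientSup I (Ideal.span {a}))
    rw [LinearEquiv.isWeaklyRegular_congr eqv]
    simp [smul_eq_mul]

theorem regSeq_append {A : Type*} [CommRing A] (l₁ l₂ : List A) : ∀ I : Ideal A,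
    RegSeq I (l₁ ++ l₂) ↔ RegSeq I l₁ ∧ RegSeq (I ⊔ Ideal.ofList l₁) l₂ := by
  induction l₁ with
  | nil => intro I; simp [RegSeq]
  | cons a l ih =>
    intro I
    simp only [List.cons_append, RegSeq, ih, Ideal.ofList_cons, and_assoc, sup_assoc]

theorem regSeq_perm {A : Type*} [CommRing A] [IsLocalRing A] [IsNoetherianRing A] {I : Ideal A}
    {l l' : List A} (h : RegSeq I l) (hp : l.Perm l')
    (hm : ∀ r ∈ l, r ∈ IsLocalRing.maximalIdeal A) : RegSeq I l' := by
  rw [← regSeq_iff] at h ⊢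
  exact IsLocalRing.isWeaklyRegular_of_perm_of_subset_maximalIdeal h hp hm

theorem regSeq_concat {A : Type*} [CommRing A] [IsLocalRing A] [IsNoetherianRing A] {I : Ideal A}
    {a : A} {l : List A} (h : RegSeq I (a :: l))
    (hm : ∀ r ∈ a :: l, r ∈ IsLocalRing.maximalIdeal A) :
    RegSeq I l ∧ ∀ x, a * x ∈ I ⊔ Ideal.ofList l → x ∈ I ⊔ Ideal.ofList l := by
  have := regSeq_perm (l' := l ++ [a]) h (List.perm_append_singleton a l).symm hm
  rw [regSeq_append] at this
  exact ⟨this.1, this.2.1⟩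

theorem regSeq_of_concat {A : Type*} [CommRing A] [IsLocalRing A] [IsNoetherianRing A]
    {I : Ideal A} {a : A} {l : List A} (h : RegSeq I l)
    (h2 : ∀ x, a * x ∈ I ⊔ Ideal.ofList l → x ∈ I ⊔ Ideal.ofList l)
    (hm : ∀ r ∈ a :: l, r ∈ IsLocalRing.maximalIdeal A) : RegSeq I (a :: l) := by
  have : RegSeq I (l ++ [a]) := (regSeq_append l [a] I).2 ⟨h, h2, trivial⟩
  exact regSeq_perm this (List.perm_append_singleton a l)
    (fun r hr => hm r ((List.perm_append_singleton a l).mem_iff.1 hr))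

theorem maximal_le_radical_of_avoid {A : Type*} [CommRing A] [IsLocalRing A] [IsNoetherianRing A]
    (J : Ideal A) (b c : A) (hJ : J ≤ IsLocalRing.maximalIdeal A)
    (hb : b ∈ IsLocalRing.maximalIdeal A)
    (hrad : IsLocalRing.maximalIdeal A ≤ (J ⊔ Ideal.span {b}).radical)
    (hc : ∀ q ∈ J.minimalPrimes, q ≠ IsLocalRing.maximalIdeal A → c ∉ q) :
    IsLocalRing.maximalIdeal A ≤ (J ⊔ Ideal.span {c}).radical := by
  rw [Ideal.radical_eq_sInf]
  refine le_sInf ?_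
  rintro P ⟨hP, hPp⟩
  by_contra hne
  have hle := IsLocalRing.le_maximalIdeal hPp.ne_top
  have hlt : P < IsLocalRing.maximalIdeal A := lt_of_le_not_ge hle hne
  have hins : Ideal.span (insert b (J : Set A)) = J ⊔ Ideal.span {b} := by
    rw [Ideal.span_insert, Ideal.span_eq, sup_comm]
  have hmin : P ∈ J.minimalPrimes := by
    have := Ideal.mem_minimalPrimes_span_of_mem_minimalPrimes_span_insert (q := P) hlt b
      (J : Set A) ?_ (J : Set A) (fun x hx => hP (Ideal.mem_sup_left hx)) ?_
    · rwa [Ideal.span_eq] at this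
    · rw [hins]
      refine ⟨⟨inferInstance, sup_le hJ ?_⟩, ?_⟩
      · rwa [Ideal.span_singleton_le_iff_mem]
      · rintro Q ⟨hQ, hQ'⟩ -
        exact hrad.trans (hQ.radical_le_iff.2 hQ')
    · rw [hins]
      intro x hx
      exact Ideal.le_radical (Ideal.mem_sup_left hx)
  exact hc P hmin hlt.ne (hP (Ideal.mem_sup_right (Ideal.mem_span_singleton_self c)))

theorem regular_exchange {A : Type*} [CommRing A] {J : Ideal A} {b c : A}
    (hb : ∀ x, b * x ∈ J → x ∈ J) (hrad : b ∈ (J ⊔ Ideal.span {c}).radical) :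
    ∀ x, c * x ∈ J → x ∈ J := by
  intro x hx
  obtain ⟨N, hN⟩ := hrad
  rw [sup_comm, Ideal.mem_span_singleton_sup] at hN
  obtain ⟨s, j, hj, h⟩ := hN
  have h1 : b ^ N * x ∈ J := by
    rw [← h, add_mul]
    refine J.add_mem ?_ (J.mul_mem_right _ hj)
    rw [mul_assoc]
    exact J.mul_mem_left _ hx
  clear h
  induction N with
  | zero => simpa using h1
  | succ N ih => exact ih (hb _ (by rwa [← mul_assoc, ← pow_succ']))

theorem regSeq_of_isCM {A : Type*} [CommRing A] [IsLocalRing A] [IsNoetherianRing A] (n : ℕ) :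
    ∀ (I : Ideal A) (bs ts : List A), bs.length = n → ts.length = n →
    I ≤ IsLocalRing.maximalIdeal A →
    (∀ r ∈ bs, r ∈ IsLocalRing.maximalIdeal A) → (∀ r ∈ ts, r ∈ IsLocalRing.maximalIdeal A) →
    RegSeq I bs → IsLocalRing.maximalIdeal A ≤ (I ⊔ Ideal.ofList bs).radical →
    IsLocalRing.maximalIdeal A ≤ (I ⊔ Ideal.ofList ts).radical → RegSeq I ts := by
  induction n with
  | zero =>
    intro I bs ts h1 h2
    rw [List.length_eq_zero_iff.1 h2]
    intros; trivial
  | succ n ih =>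
    intro I bs ts h1 h2 hI hbs hts hreg hrb hrt
    obtain ⟨b, bs, rfl⟩ := List.exists_of_length_succ _ h1
    obtain ⟨t, ts, rfl⟩ := List.exists_of_length_succ _ h2
    have hof : ∀ l : List A, (∀ r ∈ l, r ∈ IsLocalRing.maximalIdeal A) →
        Ideal.ofList l ≤ IsLocalRing.maximalIdeal A := fun l hl => Ideal.span_le.2 hl
    have hb' : ∀ r ∈ bs, r ∈ IsLocalRing.maximalIdeal A := fun r hr => hbs r (by simp [hr])
    have ht' : ∀ r ∈ ts, r ∈ IsLocalRing.maximalIdeal A := fun r hr => hts r (by simp [hr])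
    set J1 := I ⊔ Ideal.ofList bs with hJ1
    set J2 := I ⊔ Ideal.ofList ts with hJ2
    have hJ1m : J1 ≤ IsLocalRing.maximalIdeal A := sup_le hI (hof _ hb')
    have hJ2m : J2 ≤ IsLocalRing.maximalIdeal A := sup_le hI (hof _ ht')
    have hcons : ∀ (a : A) (l : List A), I ⊔ Ideal.ofList (a :: l) =
        (I ⊔ Ideal.ofList l) ⊔ Ideal.span {a} := by
      intro a l
      rw [Ideal.ofList_cons, sup_assoc, sup_comm (Ideal.span {a})]
    rw [hcons] at hrb hrt
    -- choose c
    obtain ⟨c, hcm, hc⟩ : ∃ c ∈ IsLocalRing.maximalIdeal A,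
        ∀ q ∈ J1.minimalPrimes ∪ J2.minimalPrimes, q ≠ IsLocalRing.maximalIdeal A → c ∉ q := by
      by_contra hcon
      push Not at hcon
      have hfin : ({q | q ∈ J1.minimalPrimes ∪ J2.minimalPrimes ∧
          q ≠ IsLocalRing.maximalIdeal A} : Set (Ideal A)).Finite :=
        (((Ideal.finite_minimalPrimes_of_isNoetherianRing A J1).union
          (Ideal.finite_minimalPrimes_of_isNoetherianRing A J2))).subset (fun q hq => hq.1)
      have := (Ideal.subset_union_prime_finite hfin (f := id) ⊤ ⊤ ?_
        (I := IsLocalRing.maximalIdeal A)).1 ?_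
      · obtain ⟨q, ⟨hq, hqne⟩, hle⟩ := this
        have hqp : q.IsPrime := by
          rcases hq with hq | hq
          · exact hq.1.1
          · exact hq.1.1
        exact hqne (le_antisymm (IsLocalRing.le_maximalIdeal hqp.ne_top) hle)
      · rintro q ⟨hq, -⟩ - -
        rcases hq with hq | hq
        · exact hq.1.1
        · exact hq.1.1
      · intro x hx
        obtain ⟨q, hq, hqne, hxq⟩ := hcon x hx
        simp only [Set.mem_iUnion]
        exact ⟨q, ⟨hq, hqne⟩, hxq⟩
    have hrad1 := maximal_le_radical_of_avoid J1 b c hJ1m (hbs b (by simp)) hrb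
      (fun q hq => hc q (Or.inl hq))
    have hrad2 := maximal_le_radical_of_avoid J2 t c hJ2m (hts t (by simp)) hrt
      (fun q hq => hc q (Or.inr hq))
    obtain ⟨hregbs, hbreg⟩ := regSeq_concat hreg hbs
    have hcreg := regular_exchange hbreg (hrad1 (hbs b (by simp)))
    have hcbs : RegSeq I (c :: bs) := regSeq_of_concat hregbs hcreg (by
      intro r hr
      rcases List.mem_cons.1 hr with rfl | hr
      · exact hcm
      · exact hb' r hr)
    have hswap : ∀ l : List A, I ⊔ Ideal.span {c} ⊔ Ideal.ofList l =
        (I ⊔ Ideal.ofList l) ⊔ Ideal.span {c} := by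
      intro l; rw [sup_assoc, sup_comm (Ideal.span {c}), ← sup_assoc]
    have hIc : I ⊔ Ideal.span {c} ≤ IsLocalRing.maximalIdeal A :=
      sup_le hI (by rwa [Ideal.span_singleton_le_iff_mem])
    have hts2 : RegSeq (I ⊔ Ideal.span {c}) ts :=
      ih _ bs ts (by simpa using h1) (by simpa using h2) hIc hb' ht' hcbs.2
        (by rw [hswap]; exact hrad1) (by rw [hswap]; exact hrad2)
    have hcts : RegSeq I (c :: ts) := ⟨hcbs.1, hts2⟩
    obtain ⟨hregts, hcreg2⟩ := regSeq_concat hcts (by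
      intro r hr
      rcases List.mem_cons.1 hr with rfl | hr
      · exact hcm
      · exact ht' r hr)
    have htreg := regular_exchange hcreg2 (hrt hcm)
    exact regSeq_of_concat hregts htreg hts


/-! ### Weighted-homogeneous components indexed by the integers -/

/-- The component of weighted degree `n : ℤ`. -/
def wcmp {m : ℕ} (w : Fin m → ℕ) (n : ℤ) :
    MvPolynomial (Fin m) ℂ →ₗ[ℂ] MvPolynomial (Fin m) ℂ :=
  weightedHomogeneousComponent (fun i => (w i : ℤ)) n

theorem weight_cast {m : ℕ} (w : Fin m → ℕ) (d : Fin m →₀ ℕ) :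
    Finsupp.weight (fun i => (w i : ℤ)) d = ((Finsupp.weight w d : ℕ) : ℤ) := by
  simp [Finsupp.weight_apply, Finsupp.sum]

theorem coeff_wcmp {m : ℕ} (w : Fin m → ℕ) (n : ℤ) (p : MvPolynomial (Fin m) ℂ)
    (d : Fin m →₀ ℕ) :
    coeff d (wcmp w n p) = if ((Finsupp.weight w d : ℕ) : ℤ) = n then coeff d p else 0 := by
  classical
  rw [wcmp, coeff_weightedHomogeneousComponent, weight_cast]

theorem wcmp_self_of_hom {m : ℕ} {w : Fin m → ℕ} {n : ℕ} {p : MvPolynomial (Fin m) ℂ}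
    (h : p.IsWeightedHomogeneous w n) : wcmp w n p = p := by
  ext d
  rw [coeff_wcmp]
  split_ifs with hd
  · rfl
  · by_contra hne
    exact hd (by rw [h (Ne.symm hne)])

theorem hom_of_wcmp_self {m : ℕ} {w : Fin m → ℕ} {n : ℕ} {p : MvPolynomial (Fin m) ℂ}
    (h : wcmp w n p = p) : p.IsWeightedHomogeneous w n := by
  intro d hd
  rw [← h, coeff_wcmp] at hd
  split_ifs at hd with hd'
  · exact_mod_cast hd'
  · exact absurd rfl hd

theorem wcmp_wcmp {m : ℕ} (w : Fin m → ℕ) (n k : ℤ) (p : MvPolynomial (Fin m) ℂ) :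
    wcmp w n (wcmp w k p) = if n = k then wcmp w n p else 0 := by
  ext d
  rw [coeff_wcmp, coeff_wcmp]
  split_ifs with h1 h2 h3 h3 h4
  · rw [coeff_wcmp, if_pos h1]
  · exact absurd (h1.symm.trans h2) h3
  · exact absurd (h1.trans h3) h2
  · simp
  · rw [coeff_wcmp, if_neg h1]
  · simp

theorem wcmp_idem {m : ℕ} (w : Fin m → ℕ) (n : ℤ) (p : MvPolynomial (Fin m) ℂ) :
    wcmp w n (wcmp w n p) = wcmp w n p := by simp [wcmp_wcmp]

theorem wcmp_of_self {m : ℕ} {w : Fin m → ℕ} {k : ℤ} {p : MvPolynomial (Fin m) ℂ}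
    (h : wcmp w k p = p) (n : ℤ) : wcmp w n p = if n = k then p else 0 := by
  rw [← h, wcmp_wcmp]
  split_ifs with h'
  · subst h'; exact h.symm ▸ h
  · rfl

theorem wcmp_neg {m : ℕ} (w : Fin m → ℕ) {n : ℤ} (hn : n < 0) (p : MvPolynomial (Fin m) ℂ) :
    wcmp w n p = 0 := by
  ext d
  rw [coeff_wcmp, if_neg (by omega)]; simp

theorem wcmp_monomial {m : ℕ} (w : Fin m → ℕ) (d : Fin m →₀ ℕ) (a : ℂ) :
    wcmp w (Finsupp.weight w d : ℕ) (monomial d a) = monomial d a :=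
  wcmp_self_of_hom (isWeightedHomogeneous_monomial w d a rfl)

theorem linmap_ext_hom {m : ℕ} (w : Fin m → ℕ) {N : Type*} [AddCommGroup N] [Module ℂ N]
    (L₁ L₂ : MvPolynomial (Fin m) ℂ →ₗ[ℂ] N)
    (h : ∀ (k : ℕ) p, wcmp w k p = p → L₁ p = L₂ p) : L₁ = L₂ := by
  refine LinearMap.ext fun p => ?_
  induction p using MvPolynomial.induction_on' with
  | monomial d a => exact h _ _ (wcmp_monomial w d a)
  | add p q hp hq => rw [map_add, map_add, hp, hq]

theorem hom_mul {m : ℕ} {w : Fin m → ℕ} {k d : ℕ} {p q : MvPolynomial (Fin m) ℂ}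
    (hp : wcmp w k p = p) (hq : wcmp w d q = q) : wcmp w ((k + d : ℕ) : ℤ) (p * q) = p * q :=
  wcmp_self_of_hom ((hom_of_wcmp_self hp).mul (hom_of_wcmp_self hq))

theorem wcmp_mul {m : ℕ} {w : Fin m → ℕ} {d : ℕ} {q : MvPolynomial (Fin m) ℂ}
    (hq : wcmp w d q = q) (n : ℤ) (p : MvPolynomial (Fin m) ℂ) :
    wcmp w n (p * q) = wcmp w (n - d) p * q := by
  have := linmap_ext_hom w ((wcmp w n) ∘ₗ (LinearMap.mulRight ℂ q))
    ((LinearMap.mulRight ℂ q) ∘ₗ (wcmp w (n - d))) ?_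
  · exact LinearMap.congr_fun this p
  · intro k p hp
    simp only [LinearMap.comp_apply, LinearMap.mulRight_apply]
    rw [wcmp_of_self (hom_mul hp hq), wcmp_of_self hp]
    by_cases h : n - d = k
    · rw [if_pos h, if_pos (by push_cast; omega)]
    · rw [if_neg h, if_neg (by push_cast; omega), zero_mul]

theorem wcmp_D {m : ℕ} {w : Fin m → ℕ}
    (D : Derivation ℂ (MvPolynomial (Fin m) ℂ) (MvPolynomial (Fin m) ℂ)) (e : ℕ)
    (hD : ∀ (n : ℕ) (x : MvPolynomial (Fin m) ℂ),
      x.IsWeightedHomogeneous w n → (D x).IsWeightedHomogeneous w (n + e))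
    (n : ℤ) (p : MvPolynomial (Fin m) ℂ) : wcmp w n (D p) = D (wcmp w (n - e) p) := by
  have := linmap_ext_hom w ((wcmp w n) ∘ₗ (D : MvPolynomial (Fin m) ℂ →ₗ[ℂ] _))
    ((D : MvPolynomial (Fin m) ℂ →ₗ[ℂ] _) ∘ₗ (wcmp w (n - e))) ?_
  · exact LinearMap.congr_fun this p
  · intro k p hp
    simp only [LinearMap.comp_apply, Derivation.coeFn_coe]
    rw [wcmp_of_self (wcmp_self_of_hom (hD k p (hom_of_wcmp_self hp))), wcmp_of_self hp]
    by_cases h : n - e = k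
    · rw [if_pos h, if_pos (by push_cast; omega)]
    · rw [if_neg h, if_neg (by push_cast; omega), map_zero]

theorem wcmp_bound {m : ℕ} (w : Fin m → ℕ) (p : MvPolynomial (Fin m) ℂ) :
    ∃ N : ℕ, ∀ n : ℤ, (N : ℤ) < n → wcmp w n p = 0 := by
  refine ⟨p.support.sup (fun d => Finsupp.weight w d), fun n hn => ?_⟩
  ext d
  rw [coeff_wcmp]
  split_ifs with h
  · by_contra hne
    have h1 : d ∈ p.support := by
      rw [mem_support_iff]; simpa using hne
    have := Finset.le_sup (f := fun d => (Finsupp.weight w d : ℕ)) h1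
    omega
  · simp

theorem wcmp_ext {m : ℕ} (w : Fin m → ℕ) {p q : MvPolynomial (Fin m) ℂ}
    (h : ∀ n, wcmp w n p = wcmp w n q) : p = q := by
  ext d
  have := congrArg (coeff d) (h ((Finsupp.weight w d : ℕ) : ℤ))
  simpa [coeff_wcmp] using this

/-- Polynomials of weighted degree at most `n`. -/
def FR {m : ℕ} (w : Fin m → ℕ) (n : ℤ) : Submodule ℂ (MvPolynomial (Fin m) ℂ) where
  carrier := {p | ∀ k, n < k → wcmp w k p = 0}
  add_mem' := by
    intro a b ha hb k hk
    rw [map_add, ha k hk, hb k hk, add_zero]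
  zero_mem' := by intro k hk; simp
  smul_mem' := by
    intro c a ha k hk
    rw [map_smul, ha k hk, smul_zero]

/-- Homogeneous polynomials of weighted degree `n`. -/
def Rn {m : ℕ} (w : Fin m → ℕ) (n : ℤ) : Submodule ℂ (MvPolynomial (Fin m) ℂ) where
  carrier := {p | wcmp w n p = p}
  add_mem' := by
    intro a b ha hb
    simp only [Set.mem_ofPred_eq] at *
    rw [map_add, ha, hb]
  zero_mem' := by simp
  smul_mem' := by
    intro c a ha
    simp only [Set.mem_ofPred_eq] at *
    rw [map_smul, ha]

theorem mem_FR {m : ℕ} {w : Fin m → ℕ} {n : ℤ} {p : MvPolynomial (Fin m) ℂ} :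
    p ∈ FR w n ↔ ∀ k, n < k → wcmp w k p = 0 := Iff.rfl

theorem mem_Rn {m : ℕ} {w : Fin m → ℕ} {n : ℤ} {p : MvPolynomial (Fin m) ℂ} :
    p ∈ Rn w n ↔ wcmp w n p = p := Iff.rfl

theorem FR_mono {m : ℕ} (w : Fin m → ℕ) {n k : ℤ} (h : n ≤ k) : FR w n ≤ FR w k :=
  fun _ hp j hj => hp j (by omega)

theorem Rn_le_FR {m : ℕ} (w : Fin m → ℕ) (n : ℤ) : Rn w n ≤ FR w n := by
  intro p hp k hk
  rw [wcmp_of_self hp, if_neg (by omega)]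

theorem wcmp_mem_Rn {m : ℕ} (w : Fin m → ℕ) (n : ℤ) (p : MvPolynomial (Fin m) ℂ) :
    wcmp w n p ∈ Rn w n := wcmp_idem w n p

theorem exists_mem_FR {m : ℕ} (w : Fin m → ℕ) (p : MvPolynomial (Fin m) ℂ) :
    ∃ N : ℕ, p ∈ FR w N := wcmp_bound w p

theorem FR_neg {m : ℕ} (w : Fin m → ℕ) {n : ℤ} (hn : n < 0) : FR w n = ⊥ := by
  rw [eq_bot_iff]
  intro p hp
  rw [Submodule.mem_bot]
  refine wcmp_ext w fun k => ?_
  rw [map_zero]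
  by_cases h : k < 0
  · exact wcmp_neg w h p
  · exact hp k (by omega)

theorem Rn_neg {m : ℕ} (w : Fin m → ℕ) {n : ℤ} (hn : n < 0) : Rn w n = ⊥ :=
  eq_bot_iff.2 ((Rn_le_FR w n).trans (FR_neg w hn).le)

theorem sub_wcmp_mem {m : ℕ} {w : Fin m → ℕ} {n : ℤ} {p : MvPolynomial (Fin m) ℂ}
    (hp : p ∈ FR w n) : p - wcmp w n p ∈ FR w (n - 1) := by
  intro k hk
  rw [map_sub, wcmp_wcmp]
  split_ifs with h
  · subst h; exact sub_self _
  · rw [hp k (by omega), sub_zero]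

theorem FR_mul {m : ℕ} {w : Fin m → ℕ} {d : ℕ} {q : MvPolynomial (Fin m) ℂ}
    (hq : wcmp w d q = q) {n : ℤ} {p : MvPolynomial (Fin m) ℂ} (hp : p ∈ FR w n) :
    p * q ∈ FR w (n + d) := by
  intro k hk
  rw [wcmp_mul hq, hp _ (by omega), zero_mul]

theorem FR_finite {m : ℕ} (w : Fin m → ℕ) (hw : ∀ i, 0 < w i) (n : ℤ) :
    FiniteDimensional ℂ (FR w n) := by
  have hfin : {d : Fin m →₀ ℕ | Finsupp.weight w d ≤ n.toNat}.Finite :=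
    Finsupp.finite_of_nat_weight_le w (fun i => (hw i).ne') _
  have hle : FR w n ≤ Submodule.span ℂ ((fun d => monomial d (1 : ℂ)) ''
      {d : Fin m →₀ ℕ | Finsupp.weight w d ≤ n.toNat}) := by
    intro p hp
    rw [p.as_sum]
    refine Submodule.sum_mem _ fun d hd => ?_
    have h1 : Finsupp.weight w d ≤ n.toNat := by
      by_contra hlt
      have := congrArg (coeff d) (hp (Finsupp.weight w d : ℕ) (by omega))
      rw [coeff_wcmp, if_pos rfl] at this
      exact (mem_support_iff.1 hd) (by simpa using this)
    have : monomial d (coeff d p) = coeff d p • monomial d (1 : ℂ) := by simp [smul_monomial]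
    rw [this]
    exact Submodule.smul_mem _ _ (Submodule.subset_span ⟨d, h1, rfl⟩)
  have : FiniteDimensional ℂ (Submodule.span ℂ ((fun d => monomial d (1 : ℂ)) ''
      {d : Fin m →₀ ℕ | Finsupp.weight w d ≤ n.toNat})) :=
    FiniteDimensional.span_of_finite ℂ (hfin.image _)
  exact Submodule.finiteDimensional_of_le hle

theorem Rn_finite {m : ℕ} (w : Fin m → ℕ) (hw : ∀ i, 0 < w i) (n : ℤ) :
    FiniteDimensional ℂ (Rn w n) := by
  have := FR_finite w hw n
  exact Submodule.finiteDimensional_of_le (Rn_le_FR w n)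

/-- An ideal closed under taking weighted-homogeneous components. -/
def HomI {m : ℕ} (w : Fin m → ℕ) (I : Ideal (MvPolynomial (Fin m) ℂ)) : Prop :=
  ∀ n p, p ∈ I → wcmp w n p ∈ I

theorem homI_bot {m : ℕ} (w : Fin m → ℕ) : HomI w ⊥ := by
  intro n p hp
  rw [Ideal.mem_bot] at hp ⊢
  rw [hp, map_zero]

theorem homI_sup {m : ℕ} {w : Fin m → ℕ} {I : Ideal (MvPolynomial (Fin m) ℂ)} (hI : HomI w I)
    {d : ℕ} {f : MvPolynomial (Fin m) ℂ} (hf : wcmp w d f = f) : HomI w (I ⊔ Ideal.span {f}) := by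
  intro n p hp
  rw [sup_comm, Ideal.mem_span_singleton_sup] at hp ⊢
  obtain ⟨a, i, hi, rfl⟩ := hp
  exact ⟨wcmp w (n - d) a, wcmp w n i, hI n i hi, by rw [map_add, wcmp_mul hf]⟩

theorem homI_ofList {m : ℕ} {w : Fin m → ℕ} (L : List (MvPolynomial (Fin m) ℂ))
    (hL : ∀ f ∈ L, ∃ d : ℕ, wcmp w d f = f) : ∀ I, HomI w I → HomI w (I ⊔ Ideal.ofList L) := by
  induction L with
  | nil => intro I hI; simpa using hI
  | cons f L ih =>
    intro I hI
    rw [Ideal.ofList_cons, ← sup_assoc]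
    obtain ⟨d, hd⟩ := hL f (by simp)
    exact ih (fun x hx => hL x (by simp [hx])) _ (homI_sup hI hd)

/-! ### The associated graded ideal of a deformation -/

/-- The associated graded ideal of `J` is `I`. -/
def GrI {m : ℕ} (w : Fin m → ℕ) (J I : Ideal (MvPolynomial (Fin m) ℂ)) : Prop :=
  (∀ n x, x ∈ FR w n → x ∈ J → wcmp w n x ∈ I) ∧
    (∀ n x, x ∈ Rn w n → x ∈ I → ∃ y ∈ FR w (n - 1), x - y ∈ J)

theorem grI_self {m : ℕ} {w : Fin m → ℕ} {I : Ideal (MvPolynomial (Fin m) ℂ)} (h : HomI w I) :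
    GrI w I I :=
  ⟨fun n x _ hx => h n x hx, fun n x _ hx => ⟨0, Submodule.zero_mem _, by simpa using hx⟩⟩

theorem grI_step {m : ℕ} {w : Fin m → ℕ} {J I : Ideal (MvPolynomial (Fin m) ℂ)}
    (hI : HomI w I) (hG : GrI w J I) {d : ℕ} (hd : 0 < d) {f : MvPolynomial (Fin m) ℂ}
    (hf : wcmp w d f = f) (hreg : ∀ x, f * x ∈ I → x ∈ I) (c : ℂ) :
    GrI w (J ⊔ Ideal.span {f - C c}) (I ⊔ Ideal.span {f}) := by
  have expand : ∀ (g : MvPolynomial (Fin m) ℂ) (n : ℤ),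
      wcmp w n (g * (f - C c)) = wcmp w (n - d) g * f - c • wcmp w n g := by
    intro g n
    rw [mul_sub, map_sub, wcmp_mul hf, mul_comm g (C c), ← smul_eq_C_mul, map_smul]
  have memFR : ∀ (g : MvPolynomial (Fin m) ℂ) (n : ℤ), g ∈ FR w n →
      g * (f - C c) ∈ FR w (n + d) := by
    intro g n hg k hk
    rw [expand, hg _ (by omega), hg _ (by omega)]; simp
  constructor
  · intro n x hx hxJ
    have key : ∀ (r : ℕ) (g y : MvPolynomial (Fin m) ℂ), g ∈ FR w (n - d + r) → y ∈ J →
        g * (f - C c) + y = x → ∃ g' y', g' ∈ FR w (n - d) ∧ y' ∈ J ∧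
          g' * (f - C c) + y' = x := by
      intro r
      induction r with
      | zero => intro g y hg hy h; exact ⟨g, y, by simpa using hg, hy, h⟩
      | succ r ih =>
        intro g y hg hy h
        set E : ℤ := n - d + (r + 1 : ℕ) with hE
        have hyF : y ∈ FR w (E + d) := by
          have : y = x - g * (f - C c) := by rw [← h]; ring
          rw [this]
          exact Submodule.sub_mem _ (FR_mono w (by omega) hx) (memFR g E hg)
        have h1 := hG.1 _ y hyF hy
        have h2 : wcmp w (E + d) x = 0 := hx _ (by omega)
        rw [← h, map_add, expand, hg (E + d) (by omega), smul_zero, sub_zero,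
          add_sub_cancel_right] at h2
        have h3 : f * wcmp w E g ∈ I := by
          have : f * wcmp w E g = - wcmp w (E + d) y := by linear_combination h2
          rw [this]; exact I.neg_mem h1
        obtain ⟨z, hz, hzJ⟩ := hG.2 E _ (wcmp_mem_Rn w E g) (hreg _ h3)
        refine ih (g - (wcmp w E g - z)) (y + (wcmp w E g - z) * (f - C c)) ?_
          (J.add_mem hy (J.mul_mem_right _ hzJ)) (by rw [← h]; ring)
        have h4 : g - (wcmp w E g - z) = (g - wcmp w E g) + z := by ring
        have h5 : n - d + (r : ℤ) = E - 1 := by rw [hE]; push_cast; ring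
        rw [h4, h5]
        exact Submodule.add_mem _ (sub_wcmp_mem hg) hz
    rw [sup_comm, Ideal.mem_span_singleton_sup] at hxJ ⊢
    obtain ⟨g, y, hy, h⟩ := hxJ
    obtain ⟨N, hN⟩ := exists_mem_FR w g
    obtain ⟨g, y, hg, hy, h⟩ := key (((N : ℤ) - (n - d)).toNat) g y
      (FR_mono w (by omega) hN) hy h
    have hyF : y ∈ FR w n := by
      have : y = x - g * (f - C c) := by rw [← h]; ring
      rw [this]
      exact Submodule.sub_mem _ hx (by simpa using memFR g _ hg)
    refine ⟨wcmp w (n - d) g, wcmp w n y, hG.1 n y hyF hy, ?_⟩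
    rw [← h, map_add, expand, hg n (by omega), smul_zero, sub_zero]
  · intro n x hx hxI
    rw [sup_comm, Ideal.mem_span_singleton_sup] at hxI
    obtain ⟨a, i, hi, h⟩ := hxI
    obtain ⟨y, hy, hyJ⟩ := hG.2 n _ (wcmp_mem_Rn w n i) (hI n i hi)
    have hx' : x = wcmp w (n - d) a * f + wcmp w n i := by
      rw [← wcmp_mul hf, ← map_add, h]; exact hx.symm
    refine ⟨y + c • wcmp w (n - d) a, Submodule.add_mem _ hy (Submodule.smul_mem _ _
      (FR_mono w (by omega) (Rn_le_FR w _ (wcmp_mem_Rn w (n - d) a)))), ?_⟩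
    rw [sup_comm, Ideal.mem_span_singleton_sup]
    refine ⟨wcmp w (n - d) a, wcmp w n i - y, hyJ, ?_⟩
    rw [hx', smul_eq_C_mul]; ring


/-! ### The sequence `f` is regular -/

theorem regSeq_X {m : ℕ} (l : List (Fin m)) : l.Nodup → ∀ s : Set (Fin m), (∀ i ∈ l, i ∉ s) →
    RegSeq (Ideal.span (X '' s : Set (MvPolynomial (Fin m) ℂ))) (l.map X) := by
  induction l with
  | nil => intro _ s _; trivial
  | cons i l ih =>
    intro hl s hs
    rw [List.nodup_cons] at hl
    refine ⟨fun x hx => ?_, ?_⟩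
    · rw [mem_ideal_span_X_image] at hx ⊢
      intro d hd
      have h1 : d + Finsupp.single i 1 ∈ (X i * x).support := by
        rw [mem_support_iff, mul_comm, coeff_mul_X]
        exact mem_support_iff.1 hd
      obtain ⟨j, hj, hne⟩ := hx _ h1
      refine ⟨j, hj, ?_⟩
      have hij : i ≠ j := by
        rintro rfl
        exact hs i (by simp) hj
      simpa [Finsupp.single_apply, hij] using hne
    · have h2 := ih hl.2 (insert i s) (by
        intro j hj hjs
        rcases hjs with rfl | hjs
        · exact hl.1 hj
        · exact hs j (by simp [hj]) hjs)
      rw [Set.image_insert_eq, Ideal.span_insert, sup_comm] at h2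
      exact h2

theorem regSeq_bot_iff {A : Type*} [CommRing A] (l : List A) :
    RegSeq (⊥ : Ideal A) l ↔ RingTheory.Sequence.IsWeaklyRegular A l := by
  rw [← regSeq_iff]
  exact LinearEquiv.isWeaklyRegular_congr (Submodule.quotEquivOfEqBot (⊥ : Ideal A) rfl) l

/-- The ideal of the origin. -/
def orig (m : ℕ) : Ideal (MvPolynomial (Fin m) ℂ) := RingHom.ker (constantCoeff (σ := Fin m) (R := ℂ))

instance orig_isPrime (m : ℕ) : (orig m).IsPrime := RingHom.ker_isPrime _

theorem mem_orig {m : ℕ} {p : MvPolynomial (Fin m) ℂ} : p ∈ orig m ↔ constantCoeff p = 0 :=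
  RingHom.mem_ker

theorem orig_eq (m : ℕ) : orig m = Ideal.ofList (((List.finRange m).map X)) := by
  have h : Ideal.ofList (((List.finRange m).map X) : List (MvPolynomial (Fin m) ℂ)) =
      Ideal.span (X '' Set.univ) := by
    rw [Ideal.ofList]; congr 1; ext x; simp
  rw [h]
  ext p
  rw [mem_orig, mem_ideal_span_X_image]
  constructor
  · intro h0 d hd
    by_contra hcon
    push Not at hcon
    have : d = 0 := by ext i; simpa using hcon i trivial
    subst this
    exact (mem_support_iff.1 hd) h0
  · intro h1
    by_contra hne
    obtain ⟨i, _, hi⟩ := h1 0 (mem_support_iff.2 hne)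
    exact hi rfl

theorem mem_of_wcmp_mem {m : ℕ} {w : Fin m → ℕ} {I : Ideal (MvPolynomial (Fin m) ℂ)}
    {p : MvPolynomial (Fin m) ℂ} (h : ∀ n, wcmp w n p ∈ I) : p ∈ I := by
  have key : ∀ (N : ℕ) (p : MvPolynomial (Fin m) ℂ), p ∈ FR w ((N : ℤ) - 1) →
      (∀ n, wcmp w n p ∈ I) → p ∈ I := by
    intro N
    induction N with
    | zero =>
      intro p hp _
      rw [FR_neg w (by simp)] at hp
      rw [(Submodule.mem_bot _).1 hp]; exact I.zero_mem
    | succ N ih =>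
      intro p hp hc
      have h1 := ih (p - wcmp w ((N + 1 : ℕ) - 1 : ℤ) p)
        (by have := sub_wcmp_mem hp; push_cast at this ⊢; simpa using this)
        (by
          intro n
          rw [map_sub, wcmp_wcmp]
          split_ifs
          · exact I.sub_mem (hc _) (hc _)
          · exact I.sub_mem (hc _) I.zero_mem)
      have h2 := I.add_mem h1 (hc ((N + 1 : ℕ) - 1 : ℤ))
      simpa using h2
  obtain ⟨N, hN⟩ := exists_mem_FR w p
  exact key (N + 1) p (by simpa using hN) h

theorem wcmp_zero {m : ℕ} {w : Fin m → ℕ} (hw : ∀ i, 0 < w i) (u : MvPolynomial (Fin m) ℂ) :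
    wcmp w 0 u = C (constantCoeff u) := by
  ext d
  rw [coeff_wcmp, coeff_C]
  by_cases h : d = 0
  · subst h; simp [constantCoeff]
  · have h1 : Finsupp.weight w d ≠ 0 := by
      intro h0
      apply h
      have := Finsupp.nonTorsionWeight_of (w := w) ℕ fun i => (hw i).ne'
      exact (Finsupp.weight_eq_zero_iff_eq_zero w).1 h0
    rw [if_neg (by exact_mod_cast h1), if_neg (Ne.symm h)]

theorem regSeq_of_local {m : ℕ} {w : Fin m → ℕ} (hw : ∀ i, 0 < w i)
    (L : List (MvPolynomial (Fin m) ℂ)) : (∀ f ∈ L, ∃ d : ℕ, wcmp w d f = f) →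
    ∀ I, HomI w I → RegSeq (I.map (algebraMap _ (Localization.AtPrime (orig m))))
      (L.map (algebraMap _ (Localization.AtPrime (orig m)))) → RegSeq I L := by
  induction L with
  | nil => intro _ _ _ _; trivial
  | cons f L ih =>
    intro hL I hI hreg
    obtain ⟨d, hd⟩ := hL f (by simp)
    refine ⟨fun x hx => ?_, ?_⟩
    · refine mem_of_wcmp_mem (w := w) fun n => ?_
      have h1 : f * wcmp w n x ∈ I := by
        have := hI (n + d) _ hx
        rw [mul_comm, wcmp_mul hd] at this
        rw [mul_comm]; simpa using this
      have h2 := hreg.1 (algebraMap _ _ (wcmp w n x))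
        (by rw [← map_mul]; exact Ideal.mem_map_of_mem _ h1)
      rw [IsLocalization.algebraMap_mem_map_algebraMap_iff (orig m).primeCompl] at h2
      obtain ⟨u, hu, hux⟩ := h2
      by_cases hn : n < 0
      · rw [wcmp_neg w hn]; exact I.zero_mem
      obtain ⟨k, rfl⟩ := Int.eq_ofNat_of_zero_le (not_lt.1 hn)
      have h3 := hI k _ hux
      rw [wcmp_mul (wcmp_idem w k x), sub_self, wcmp_zero hw] at h3
      have hu' : constantCoeff u ≠ 0 := fun h => hu (mem_orig.2 h)
      have h4 := I.mul_mem_left (C (constantCoeff u)⁻¹) h3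
      rwa [← mul_assoc, ← C_mul, inv_mul_cancel₀ hu', C_1, one_mul] at h4
    · refine ih (fun x hx => hL x (by simp [hx])) _ (homI_sup hI hd) ?_
      have := hreg.2
      rwa [Ideal.map_sup, Ideal.map_span, Set.image_singleton]

theorem exists_params {m g : ℕ} (I : Ideal (MvPolynomial (Fin m) ℂ)) (hI : I ≤ orig m)
    (hdim : ringKrullDim (MvPolynomial (Fin m) ℂ ⧸ I) ≤ (g : WithBot (WithTop ℕ))) :
    ∃ l : List (MvPolynomial (Fin m) ℂ), l.length = g ∧ (∀ x ∈ l, x ∈ orig m) ∧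
      orig m ∈ (I ⊔ Ideal.ofList l).minimalPrimes := by
  classical
  let p := orig m
  let p' := p.map (algebraMap _ (MvPolynomial (Fin m) ℂ ⧸ I))
  have hp' : p'.IsPrime := Ideal.isPrime_map_quotientMk_of_isPrime hI
  obtain ⟨s, hps, hs⟩ := Ideal.exists_finset_card_eq_height_of_isNoetherianRing p'
  have hsp' : (s : Set (MvPolynomial (Fin m) ℂ ⧸ I)) ⊆ (p' : Set _) :=
    fun _ hx ↦ hps.le (Ideal.subset_span hx)
  have : Set.SurjOn (Ideal.Quotient.mk I) p s := by
    refine Set.SurjOn.mono subset_rfl hsp' fun x hx ↦ ?_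
    obtain ⟨x, rfl⟩ := Ideal.Quotient.mk_surjective x
    exact ⟨x, by simpa [hI, sup_of_le_left, p', p] using hx⟩
  obtain ⟨o, hsubset, ho, himgo⟩ := s.exists_subset_injOn_image_eq_of_surjOn (p : Set (MvPolynomial (Fin m) ℂ)) this
  have hcard : o.card ≤ g := by
    have h1 : (p'.height : WithBot ℕ∞) ≤ (g : WithBot (WithTop ℕ)) :=
      (Ideal.height_le_ringKrullDim_of_ne_top hp'.ne_top).trans hdim
    rw [← hs] at h1
    have h2 : o.card = s.card := by rw [← himgo, Finset.card_image_of_injOn ho]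
    rw [h2]
    have h3 : ((s.card : ℕ∞) : WithBot ℕ∞) ≤ ((g : ℕ∞) : WithBot ℕ∞) := h1
    exact_mod_cast h3
  refine ⟨o.toList ++ List.replicate (g - o.card) 0, by simp; omega, ?_, ?_⟩
  · intro x hx
    rw [List.mem_append] at hx
    rcases hx with hx | hx
    · exact hsubset (by simpa using hx)
    · rw [(List.mem_replicate.1 hx).2]; exact Ideal.zero_mem _
  · have h3 : Ideal.ofList (o.toList ++ List.replicate (g - o.card) 0) =
        Ideal.span (o : Set (MvPolynomial (Fin m) ℂ)) := by
      rw [Ideal.ofList_append]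
      have : Ideal.ofList (List.replicate (g - o.card) (0 : MvPolynomial (Fin m) ℂ)) = ⊥ := by
        rw [eq_bot_iff, Ideal.ofList, Ideal.span_le]
        intro x hx
        simp only [Set.mem_ofPred_eq] at hx
        simp [(List.mem_replicate.1 hx).2]
      rw [this, sup_bot_eq, Ideal.ofList]
      congr 1; ext x; simp
    rw [h3]
    refine Ideal.mem_minimalPrimes_sup hI ?_
    convert! hps
    simp [Ideal.map_span, ← himgo]

theorem ofList_map_eq {A B : Type*} [CommRing A] [CommRing B] (φ : A →+* B) (l : List A) :
    Ideal.ofList (l.map φ) = (Ideal.ofList l).map φ := (Ideal.map_ofList φ l).symm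

theorem regSeq_f {m g : ℕ} (hg : g ≤ m) {w : Fin m → ℕ} (hw : ∀ i, 0 < w i)
    (L : List (MvPolynomial (Fin m) ℂ)) (hlen : L.length = m - g)
    (hL : ∀ f ∈ L, ∃ d : ℕ, 0 < d ∧ wcmp w d f = f)
    (hdim : ringKrullDim (MvPolynomial (Fin m) ℂ ⧸ Ideal.ofList L) ≤ (g : WithBot (WithTop ℕ))) :
    RegSeq ⊥ L := by
  have hmem : ∀ f ∈ L, f ∈ orig m := by
    intro f hf
    obtain ⟨d, hd, h⟩ := hL f hf
    have h1 : wcmp w 0 f = 0 := by rw [wcmp_of_self h, if_neg (by omega)]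
    rw [wcmp_zero hw] at h1
    rw [mem_orig]
    simpa using h1
  have hle : Ideal.ofList L ≤ orig m := by
    rw [Ideal.ofList, Ideal.span_le]; exact hmem
  obtain ⟨h, hh, hho, hmin⟩ := exists_params _ hle hdim
  refine regSeq_of_local hw L (fun f hf => (hL f hf).imp fun d hd => hd.2) ⊥ (homI_bot w) ?_
  rw [Ideal.map_bot]
  set A := Localization.AtPrime (orig m)
  set φ := algebraMap (MvPolynomial (Fin m) ℂ) A
  have hN : IsNoetherianRing A := IsLocalization.isNoetherianRing (orig m).primeCompl A inferInstance
  have hmax : (orig m).map φ = IsLocalRing.maximalIdeal A :=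
    IsLocalization.AtPrime.map_eq_maximalIdeal (orig m) A
  have hall : ∀ l : List (MvPolynomial (Fin m) ℂ), (∀ f ∈ l, f ∈ orig m) →
      ∀ r ∈ l.map φ, r ∈ IsLocalRing.maximalIdeal A := by
    intro l hl r hr
    obtain ⟨x, hx, rfl⟩ := List.mem_map.1 hr
    rw [← hmax]
    exact Ideal.mem_map_of_mem _ (hl x hx)
  have hX := regSeq_X (List.finRange m) (List.nodup_finRange m) ∅ (by simp)
  rw [Set.image_empty, Ideal.span_empty, regSeq_bot_iff] at hX
  have hX2 := RingTheory.Sequence.IsWeaklyRegular.of_isLocalization A (orig m).primeCompl hX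
  rw [← regSeq_bot_iff] at hX2
  have := regSeq_of_isCM m (⊥ : Ideal A) _ ((L ++ h).map φ) (by simp) (by simp [hlen, hh]; omega)
    bot_le ?_ ?_ hX2 ?_ ?_
  · rw [List.map_append, regSeq_append] at this
    exact this.1
  · refine hall _ ?_
    intro f hf
    rw [orig_eq]
    exact Ideal.subset_span hf
  · refine hall _ ?_
    intro f hf
    rcases List.mem_append.1 hf with hf | hf
    · exact hmem f hf
    · exact hho f hf
  · rw [bot_sup_eq, ofList_map_eq, ← orig_eq]
    rw [← hmax]
    exact Ideal.le_radical
  · rw [bot_sup_eq, ofList_map_eq, Ideal.ofList_append, ← hmax]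
    exact (IsLocalization.AtPrime.radical_map_of_mem_minimalPrimes A (orig m) _ hmin).ge

theorem grI_list {m : ℕ} {w : Fin m → ℕ} (L : List (MvPolynomial (Fin m) ℂ × ℂ)) :
    (∀ f ∈ L, ∃ d : ℕ, 0 < d ∧ wcmp w d f.1 = f.1) →
    ∀ J I, HomI w I → GrI w J I → RegSeq I (L.map Prod.fst) →
      GrI w (J ⊔ Ideal.ofList (L.map fun f => f.1 - C f.2)) (I ⊔ Ideal.ofList (L.map Prod.fst)) := by
  induction L with
  | nil => intro _ J I _ hG _; simpa using hG
  | cons f L ih =>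
    intro hL J I hI hG hreg
    obtain ⟨d, hd, h⟩ := hL f (by simp)
    rw [List.map_cons, List.map_cons, Ideal.ofList_cons, Ideal.ofList_cons, ← sup_assoc,
      ← sup_assoc]
    exact ih (fun x hx => hL x (by simp [hx])) _ _ (homI_sup hI h)
      (grI_step hI hG hd h hreg.1 f.2) hreg.2


/-! ### Hilbert series -/

theorem finrank_map_add {V W : Type*} [AddCommGroup V] [Module ℂ V] [AddCommGroup W] [Module ℂ W]
    (φ : V →ₗ[ℂ] W) (S : Submodule ℂ V) [FiniteDimensional ℂ S] :
    Module.finrank ℂ (S.map φ) + Module.finrank ℂ (S ⊓ LinearMap.ker φ : Submodule ℂ V) =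
      Module.finrank ℂ S := by
  have h := LinearMap.finrank_range_add_finrank_ker (φ.domRestrict S)
  rw [LinearMap.range_domRestrict] at h
  rw [← h]
  congr 1
  have h2 : (S ⊓ LinearMap.ker φ : Submodule ℂ V) =
      (LinearMap.ker (φ.domRestrict S)).map S.subtype := by
    ext x
    simp only [Submodule.mem_inf, LinearMap.mem_ker, Submodule.mem_map, Submodule.subtype_apply,
      LinearMap.domRestrict_apply, Subtype.exists, exists_and_left, exists_prop]
    constructor
    · rintro ⟨h1, h2⟩; exact ⟨x, h2, h1, rfl⟩
    · rintro ⟨y, h1, h2, rfl⟩; exact ⟨h2, h1⟩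
  rw [h2]
  exact Submodule.finrank_map_subtype_eq _ _

/-- The quotient map as a linear map. -/
def qmk {m : ℕ} (I : Ideal (MvPolynomial (Fin m) ℂ)) :
    MvPolynomial (Fin m) ℂ →ₗ[ℂ] (MvPolynomial (Fin m) ℂ ⧸ I) :=
  (Ideal.Quotient.mkₐ ℂ I).toLinearMap

theorem qmk_apply {m : ℕ} (I : Ideal (MvPolynomial (Fin m) ℂ)) (x) :
    qmk I x = Ideal.Quotient.mk I x := rfl

theorem qmk_eq_zero {m : ℕ} {I : Ideal (MvPolynomial (Fin m) ℂ)} {x} :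
    qmk I x = 0 ↔ x ∈ I := by rw [qmk_apply, Ideal.Quotient.eq_zero_iff_mem]

theorem qmk_eq {m : ℕ} {I : Ideal (MvPolynomial (Fin m) ℂ)} {x y} :
    qmk I x = qmk I y ↔ x - y ∈ I := by rw [← sub_eq_zero, ← map_sub, qmk_eq_zero]

theorem qmk_surj {m : ℕ} (I : Ideal (MvPolynomial (Fin m) ℂ)) : Function.Surjective (qmk I) :=
  Ideal.Quotient.mk_surjective

theorem ker_qmk {m : ℕ} (I : Ideal (MvPolynomial (Fin m) ℂ)) :
    LinearMap.ker (qmk I) = I.restrictScalars ℂ := by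
  ext x; rw [LinearMap.mem_ker, qmk_eq_zero]; rfl

/-- Hilbert function. -/
def hI {m : ℕ} (w : Fin m → ℕ) (I : Ideal (MvPolynomial (Fin m) ℂ)) (n : ℤ) : ℕ :=
  Module.finrank ℂ ((Rn w n).map (qmk I))

theorem hI_neg {m : ℕ} (w : Fin m → ℕ) (I : Ideal (MvPolynomial (Fin m) ℂ)) {n : ℤ} (hn : n < 0) :
    hI w I n = 0 := by
  rw [hI, Rn_neg w hn, Submodule.map_bot, finrank_bot]

theorem hI_step {m : ℕ} {w : Fin m → ℕ} (hw : ∀ i, 0 < w i)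
    {I : Ideal (MvPolynomial (Fin m) ℂ)}
    (hI' : HomI w I) {d : ℕ} {f : MvPolynomial (Fin m) ℂ}
    (hf : wcmp w d f = f) (hreg : ∀ x, f * x ∈ I → x ∈ I) (n : ℤ) :
    hI w (I ⊔ Ideal.span {f}) n + hI w I (n - d) = hI w I n := by
  have := Rn_finite w hw
  set K := I ⊔ Ideal.span {f} with hK
  have e1 := finrank_map_add (qmk I) (Rn w n)
  have e2 := finrank_map_add (qmk K) (Rn w n)
  have e3 := finrank_map_add (qmk I) (Rn w (n - d))
  have e4 := finrank_map_add (qmk I ∘ₗ LinearMap.mulRight ℂ f) (Rn w (n - d))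
  have fin5 : FiniteDimensional ℂ (Rn w n ⊓ LinearMap.ker (qmk K) : Submodule ℂ _) :=
    Submodule.finiteDimensional_of_le inf_le_left
  have e5 := finrank_map_add (qmk I) (Rn w n ⊓ LinearMap.ker (qmk K))
  have k1 : (Rn w n ⊓ LinearMap.ker (qmk K)) ⊓ LinearMap.ker (qmk I) =
      Rn w n ⊓ LinearMap.ker (qmk I) := by
    have hle : LinearMap.ker (qmk I) ≤ LinearMap.ker (qmk K) := by
      rw [ker_qmk, ker_qmk]
      exact (le_sup_left : I ≤ K)
    rw [inf_assoc, inf_eq_right.2 hle]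
  have k2 : Rn w (n - d) ⊓ LinearMap.ker (qmk I ∘ₗ LinearMap.mulRight ℂ f) =
      Rn w (n - d) ⊓ LinearMap.ker (qmk I) := by
    ext x
    simp only [Submodule.mem_inf, LinearMap.mem_ker, LinearMap.comp_apply,
      LinearMap.mulRight_apply, qmk_eq_zero]
    refine and_congr_right fun _ => ⟨fun h => hreg x (by rwa [mul_comm]),
      fun h => I.mul_mem_right _ h⟩
  have k3 : (Rn w n ⊓ LinearMap.ker (qmk K)).map (qmk I) =
      (Rn w (n - d)).map (qmk I ∘ₗ LinearMap.mulRight ℂ f) := by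
    ext y
    simp only [Submodule.mem_map, Submodule.mem_inf, LinearMap.mem_ker, LinearMap.comp_apply,
      LinearMap.mulRight_apply, qmk_eq_zero]
    constructor
    · rintro ⟨x, ⟨hx, hxK⟩, rfl⟩
      rw [hK, sup_comm, Ideal.mem_span_singleton_sup] at hxK
      obtain ⟨a, i, hi, rfl⟩ := hxK
      refine ⟨wcmp w (n - d) a, wcmp_mem_Rn _ _ _, ?_⟩
      rw [qmk_eq]
      have h1 : a * f + i = wcmp w (n - d) a * f + wcmp w n i := by
        rw [← wcmp_mul hf, ← map_add]; exact hx.symm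
      rw [h1]
      have := I.neg_mem (hI' n i hi)
      convert! this using 1
      ring
    · rintro ⟨x, hx, rfl⟩
      refine ⟨x * f, ⟨?_, ?_⟩, rfl⟩
      · rw [mem_Rn, wcmp_mul hf, mem_Rn.1 hx]
      · exact Ideal.mul_mem_left _ _ (Ideal.mem_sup_right (Ideal.mem_span_singleton_self f))
  rw [k2] at e4
  rw [k1, k3] at e5
  unfold hI
  omega

/-- Hilbert series. -/
def hs {m : ℕ} (w : Fin m → ℕ) (I : Ideal (MvPolynomial (Fin m) ℂ)) : PowerSeries ℚ :=
  PowerSeries.mk fun n => (hI w I n : ℚ)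

theorem hs_step {m : ℕ} {w : Fin m → ℕ} (hw : ∀ i, 0 < w i)
    {I : Ideal (MvPolynomial (Fin m) ℂ)}
    (hI' : HomI w I) {d : ℕ} {f : MvPolynomial (Fin m) ℂ}
    (hf : wcmp w d f = f) (hreg : ∀ x, f * x ∈ I → x ∈ I) :
    hs w (I ⊔ Ideal.span {f}) = hs w I * (1 - PowerSeries.X ^ d) := by
  ext n
  have h := hI_step hw hI' hf hreg n
  rw [mul_sub, mul_one, map_sub, PowerSeries.coeff_mul_X_pow', hs, hs, PowerSeries.coeff_mk,
    PowerSeries.coeff_mk, ← h]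
  split_ifs with hd
  · rw [PowerSeries.coeff_mk]; push_cast [hd]; ring
  · rw [hI_neg w I (by omega)]; simp

theorem hs_list {m : ℕ} {w : Fin m → ℕ} (hw : ∀ i, 0 < w i)
    (L : List (MvPolynomial (Fin m) ℂ × ℕ)) : (∀ f ∈ L, wcmp w f.2 f.1 = f.1) →
    ∀ I, HomI w I → RegSeq I (L.map Prod.fst) →
      hs w (I ⊔ Ideal.ofList (L.map Prod.fst)) =
        hs w I * (L.map fun f => (1 - PowerSeries.X ^ f.2 : PowerSeries ℚ)).prod := by
  induction L with
  | nil => intro _ I _ _; simp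
  | cons f L ih =>
    intro hL I hI' hreg
    have hf := hL f (by simp)
    rw [List.map_cons, Ideal.ofList_cons, ← sup_assoc,
      ih (fun x hx => hL x (by simp [hx])) _ (homI_sup hI' hf) hreg.2, hs_step hw hI' hf hreg.1,
      List.map_cons, List.prod_cons, mul_assoc]

theorem hs_orig {m : ℕ} {w : Fin m → ℕ} (hw : ∀ i, 0 < w i) : hs w (orig m) = 1 := by
  ext n
  rw [hs, PowerSeries.coeff_mk, PowerSeries.coeff_one]
  split_ifs with h
  · subst h
    have h1 : (Rn w ((0 : ℕ) : ℤ)).map (qmk (orig m)) = Submodule.span ℂ {qmk (orig m) 1} := by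
      ext y
      rw [Submodule.mem_map, Submodule.mem_span_singleton]
      constructor
      · rintro ⟨x, hx, rfl⟩
        refine ⟨constantCoeff x, ?_⟩
        have : x = C (constantCoeff x) := by rw [← wcmp_zero hw]; exact hx.symm
        rw [← map_smul, smul_eq_C_mul, mul_one, ← this]
      · rintro ⟨a, rfl⟩
        refine ⟨C a, ?_, by rw [← map_smul, smul_eq_C_mul, mul_one]⟩
        rw [mem_Rn]
        simp [wcmp_zero hw]
    rw [hI, h1, finrank_span_singleton]
    · simp
    · rw [Ne, qmk_eq_zero, mem_orig]; simp
  · have h1 : (Rn w (n : ℤ)).map (qmk (orig m)) = ⊥ := by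
      rw [eq_bot_iff]
      rintro _ ⟨x, hx, rfl⟩
      rw [Submodule.mem_bot, qmk_eq_zero, mem_orig]
      have : wcmp w 0 x = 0 := by rw [wcmp_of_self hx, if_neg (by omega)]
      rw [wcmp_zero hw] at this
      simpa using this
    rw [hI, h1, finrank_bot]; simp

theorem wcmp_X {m : ℕ} (w : Fin m → ℕ) (i : Fin m) :
    wcmp w (w i) (X i : MvPolynomial (Fin m) ℂ) = X i :=
  wcmp_self_of_hom (isWeightedHomogeneous_X ℂ w i)

theorem hs_bot {m : ℕ} {w : Fin m → ℕ} (hw : ∀ i, 0 < w i) :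
    hs w (⊥ : Ideal (MvPolynomial (Fin m) ℂ)) * ∏ i, (1 - PowerSeries.X ^ w i) = 1 := by
  have hX := regSeq_X (List.finRange m) (List.nodup_finRange m) ∅ (by simp)
  rw [Set.image_empty, Ideal.span_empty] at hX
  have h := hs_list hw ((List.finRange m).map fun i => ((X i : MvPolynomial (Fin m) ℂ), w i))
    (by
      intro f hf
      obtain ⟨i, _, rfl⟩ := List.mem_map.1 hf
      exact wcmp_X w i) ⊥ (homI_bot w)
    (by rw [List.map_map]; exact hX)
  rw [List.map_map, List.map_map, bot_sup_eq] at h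
  have h2 := orig_eq m
  have h3 : (Prod.fst ∘ fun i => ((X i : MvPolynomial (Fin m) ℂ), w i)) = X := rfl
  rw [h3, ← h2, hs_orig hw] at h
  refine Eq.trans ?_ h.symm
  congr 1

theorem hs_f {m r : ℕ} {w : Fin m → ℕ} (hw : ∀ i, 0 < w i)
    (f : Fin r → MvPolynomial (Fin m) ℂ) (d : Fin r → ℕ) (hf : ∀ j, wcmp w (d j) (f j) = f j)
    (hreg : RegSeq ⊥ (List.ofFn f)) :
    hs w (Ideal.span (Set.range f)) * ∏ i, (1 - PowerSeries.X ^ w i) =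
      ∏ j, (1 - PowerSeries.X ^ d j) := by
  have h := hs_list hw ((List.finRange r).map fun j => (f j, d j))
    (by
      intro x hx
      obtain ⟨i, _, rfl⟩ := List.mem_map.1 hx
      exact hf i) ⊥ (homI_bot w)
    (by rw [List.map_map]; rw [List.ofFn_eq_map] at hreg; exact hreg)
  rw [List.map_map, List.map_map, bot_sup_eq] at h
  have h2 : Ideal.ofList ((List.finRange r).map (Prod.fst ∘ fun j => (f j, d j))) =
      Ideal.span (Set.range f) := by
    rw [Ideal.ofList]; congr 1; ext x; simp
  rw [h2] at h
  rw [h, mul_right_comm, hs_bot hw, one_mul, ← List.ofFn_eq_map, List.prod_ofFn]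
  rfl

/-- The filtration on the quotient by `J`. -/
def FJ {m : ℕ} (w : Fin m → ℕ) (J : Ideal (MvPolynomial (Fin m) ℂ)) (n : ℤ) :
    Submodule ℂ (MvPolynomial (Fin m) ℂ ⧸ J) := (FR w n).map (qmk J)

theorem FJ_neg {m : ℕ} (w : Fin m → ℕ) (J : Ideal (MvPolynomial (Fin m) ℂ)) {n : ℤ} (hn : n < 0) :
    FJ w J n = ⊥ := by rw [FJ, FR_neg w hn, Submodule.map_bot]

theorem FJ_mono {m : ℕ} (w : Fin m → ℕ) (J : Ideal (MvPolynomial (Fin m) ℂ)) {n k : ℤ}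
    (h : n ≤ k) : FJ w J n ≤ FJ w J k := Submodule.map_mono (FR_mono w h)

theorem FJ_finite {m : ℕ} {w : Fin m → ℕ} (hw : ∀ i, 0 < w i)
    (J : Ideal (MvPolynomial (Fin m) ℂ)) (n : ℤ) : FiniteDimensional ℂ (FJ w J n) := by
  have := FR_finite w hw n
  unfold FJ
  infer_instance

theorem FJ_step {m : ℕ} {w : Fin m → ℕ} (hw : ∀ i, 0 < w i)
    {J I : Ideal (MvPolynomial (Fin m) ℂ)} (hG : GrI w J I) (n : ℤ) :
    Module.finrank ℂ (FJ w J n) = Module.finrank ℂ (FJ w J (n - 1)) + hI w I n := by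
  have := FR_finite w hw
  have := Rn_finite w hw
  have e1 := finrank_map_add (qmk J) (FR w n)
  have e2 := finrank_map_add (qmk J) (FR w (n - 1))
  have e3 := finrank_map_add (qmk I) (Rn w n)
  have e4 := finrank_map_add (wcmp w n) (FR w n)
  have fin5 : FiniteDimensional ℂ (FR w n ⊓ LinearMap.ker (qmk J) : Submodule ℂ _) :=
    Submodule.finiteDimensional_of_le inf_le_left
  have e5 := finrank_map_add (wcmp w n) (FR w n ⊓ LinearMap.ker (qmk J))
  have k0 : FR w n ⊓ LinearMap.ker (wcmp w n) = FR w (n - 1) := by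
    ext x
    rw [Submodule.mem_inf, LinearMap.mem_ker]
    constructor
    · rintro ⟨h1, h2⟩
      have := sub_wcmp_mem h1
      rwa [h2, sub_zero] at this
    · intro h
      exact ⟨FR_mono w (by omega) h, h n (by omega)⟩
  have k1 : (FR w n ⊓ LinearMap.ker (qmk J)) ⊓ LinearMap.ker (wcmp w n) =
      FR w (n - 1) ⊓ LinearMap.ker (qmk J) := by
    rw [inf_right_comm, k0]
  have k2 : (FR w n).map (wcmp w n) = Rn w n := by
    ext x
    constructor
    · rintro ⟨y, _, rfl⟩; exact wcmp_mem_Rn _ _ _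
    · intro h; exact ⟨x, Rn_le_FR w n h, h⟩
  have k3 : (FR w n ⊓ LinearMap.ker (qmk J)).map (wcmp w n) =
      Rn w n ⊓ LinearMap.ker (qmk I) := by
    ext x
    simp only [Submodule.mem_map, Submodule.mem_inf, LinearMap.mem_ker, qmk_eq_zero]
    constructor
    · rintro ⟨y, ⟨h1, h2⟩, rfl⟩
      exact ⟨wcmp_mem_Rn _ _ _, hG.1 n y h1 h2⟩
    · rintro ⟨h1, h2⟩
      obtain ⟨y, hy, hyJ⟩ := hG.2 n x h1 h2
      refine ⟨x - y, ⟨Submodule.sub_mem _ (Rn_le_FR w n h1) (FR_mono w (by omega) hy), hyJ⟩, ?_⟩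
      rw [map_sub, hy n (by omega), sub_zero, h1]
  rw [k0, k2] at e4
  rw [k1, k3] at e5
  unfold FJ hI
  omega


/-! ### Coordinates on the Koszul complex -/

/-- Basis of the exterior power. -/
def eB (g k : ℕ) : Module.Basis (Set.powersetCard (Fin g) k) ℂ (ExtPow g k) :=
  (Pi.basisFun ℂ (Fin g)).exteriorPower k

instance (g k : ℕ) : Fintype (Set.powersetCard (Fin g) k) := Fintype.ofFinite _

/-- Matrix coefficient of the wedge map. -/
def wc {g k : ℕ} (j : Fin g) (s : Set.powersetCard (Fin g) (k + 1))
    (s' : Set.powersetCard (Fin g) k) : ℂ :=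
  (eB g (k + 1)).coord s (wedgeBasis g k j (eB g k s'))

theorem wc_ne {g k : ℕ} {j : Fin g} {s : Set.powersetCard (Fin g) (k + 1)}
    {s' : Set.powersetCard (Fin g) k} (h : wc j s s' ≠ 0) : j ∉ s'.1 ∧ s.1 = insert j s'.1 := by
  classical
  set em := Set.powersetCard.ofFinEmbEquiv.symm s' with hem
  set t : Fin (k + 1) → Fin g := Fin.cons j em with ht
  have h1 : wedgeBasis g k j (eB g k s') =
      exteriorPower.ιMulti ℂ (k + 1) (fun i => Pi.basisFun ℂ (Fin g) (t i)) := by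
    apply Subtype.ext
    have h2 : ((eB g k s' : ExtPow g k) : ExteriorAlgebra ℂ (Fin g → ℂ)) =
        ExteriorAlgebra.ιMulti ℂ k ((Pi.basisFun ℂ (Fin g)) ∘ em) := by
      exact congrArg Subtype.val (exteriorPower.basis_apply ℂ k (Pi.basisFun ℂ (Fin g)) s')
    rw [exteriorPower.ιMulti_apply_coe, ExteriorAlgebra.ιMulti_succ_apply]
    change ExteriorAlgebra.ι ℂ (Pi.single j (1 : ℂ)) * ((eB g k s' : ExtPow g k) : ExteriorAlgebra ℂ (Fin g → ℂ)) = _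
    rw [h2]
    congr 1
    · simp [ht]
  have h3 : wc j s s' = (Matrix.of fun i l => (Pi.basisFun ℂ (Fin g)).coord
      (Set.powersetCard.ofFinEmbEquiv.symm s l) (Pi.basisFun ℂ (Fin g) (t i))).det := by
    rw [wc, h1, ← exteriorPower.ιMultiDual_apply_ιMulti, ← exteriorPower.basis_coord]
    rfl
  rw [h3] at h
  have h4 : ∀ i, t i ∈ s.1 := by
    intro i
    by_contra hi
    apply h
    refine Matrix.det_eq_zero_of_row_eq_zero i fun l => ?_
    simp only [Matrix.of_apply, Pi.basisFun_apply, Module.Basis.coord_apply, Pi.basisFun_repr]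
    rw [Pi.single_apply, if_neg]
    intro heq
    apply hi
    rw [← heq]
    exact (Set.powersetCard.mem_range_ofFinEmbEquiv_symm_iff_mem s _).1 ⟨l, rfl⟩
  have h5 : ∀ i, i ∈ s'.1 → ∃ l, em l = i := fun i hi =>
    (Set.powersetCard.mem_range_ofFinEmbEquiv_symm_iff_mem s' i).2 hi
  have h6 : j ∉ s'.1 := by
    intro hj
    obtain ⟨l, hl⟩ := h5 j hj
    apply h
    refine Matrix.det_zero_of_row_eq (i := 0) (j := l.succ) (Fin.succ_ne_zero l).symm ?_
    funext i
    simp [ht, hl]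
  refine ⟨h6, ?_⟩
  symm
  apply Finset.eq_of_subset_of_card_le
  · intro i hi
    rcases Finset.mem_insert.1 hi with rfl | hi
    · simpa [ht] using h4 0
    · obtain ⟨l, rfl⟩ := h5 i hi
      simpa [ht] using h4 l.succ
  · rw [Finset.card_insert_of_notMem h6]
    have e1 : s.1.card = k + 1 := s.2
    have e2 : s'.1.card = k := s'.2
    omega

section coords
variable {M : Type} [AddCommGroup M] [Module ℂ M] {N : Type} [AddCommGroup N] [Module ℂ N]

/-- Pure tensors in the space of cochains. -/
def kt {g k : ℕ} : M →ₗ[ℂ] ExtPow g k →ₗ[ℂ] KCochain M g k := TensorProduct.mk ℂ M (ExtPow g k)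

/-- Coordinates of a cochain. -/
def co {g k : ℕ} (s : Set.powersetCard (Fin g) k) : KCochain M g k →ₗ[ℂ] M :=
  (TensorProduct.rid ℂ M).toLinearMap ∘ₗ LinearMap.lTensor M ((eB g k).coord s)

/-- The cochain with a single coordinate. -/
def ic {g k : ℕ} (s : Set.powersetCard (Fin g) k) : M →ₗ[ℂ] KCochain M g k :=
  (kt (M := M) (g := g) (k := k)).flip (eB g k s)

theorem co_tmul {g k : ℕ} (s : Set.powersetCard (Fin g) k) (x : M) (ω : ExtPow g k) :
    co s (kt x ω) = (eB g k).coord s ω • x := by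
  exact TensorProduct.rid_tmul _ _

theorem ic_apply {g k : ℕ} (s : Set.powersetCard (Fin g) k) (x : M) :
    ic s x = kt x (eB g k s) := rfl

theorem co_ic {g k : ℕ} (s s' : Set.powersetCard (Fin g) k) (x : M) [Decidable (s = s')] :
    co s (ic s' x) = if s = s' then x else 0 := by
  rw [ic_apply, co_tmul]
  simp only [Module.Basis.coord_apply, Module.Basis.repr_self, Finsupp.single_apply]
  split_ifs with h1 h2 h2
  · simp
  · exact absurd h1.symm h2
  · exact absurd h2.symm h1
  · simp

theorem kc_ind {g k : ℕ} {p : KCochain M g k → Prop} (h0 : p 0)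
    (ht : ∀ (x : M) (ω : ExtPow g k), p (kt x ω))
    (ha : ∀ x y, p x → p y → p (x + y)) (z : KCochain M g k) : p z :=
  TensorProduct.induction_on (motive := p) z h0 ht ha

theorem sum_ic_co {g k : ℕ} (z : KCochain M g k) : ∑ s, ic s (co s z) = z := by
  induction z using kc_ind with
  | h0 => simp
  | ha x y hx hy =>
    simp only [map_add, Finset.sum_add_distrib, hx, hy]
  | ht x ω =>
    conv_rhs => rw [← (eB g k).sum_repr ω, map_sum]
    refine Finset.sum_congr rfl fun s _ => ?_
    rw [co_tmul, map_smul, ic_apply, map_smul]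
    rfl

theorem co_ext {g k : ℕ} {z z' : KCochain M g k} (h : ∀ s, co s z = co s z') : z = z' := by
  rw [← sum_ic_co z, ← sum_ic_co z']
  simp only [h]

/-- Reconstruct a cochain from coordinates. -/
def mkc {g k : ℕ} (x : Set.powersetCard (Fin g) k → M) : KCochain M g k := ∑ s, ic s (x s)

theorem co_mkc {g k : ℕ} (x : Set.powersetCard (Fin g) k → M) (s) : co s (mkc x) = x s := by
  classical
  rw [mkc, map_sum]
  simp [co_ic]

/-- A cochain is the same as its coordinates. -/
def coEquiv (M : Type) [AddCommGroup M] [Module ℂ M] (g k : ℕ) :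
    KCochain M g k ≃ₗ[ℂ] (Set.powersetCard (Fin g) k → M) where
  toFun z s := co s z
  map_add' x y := by ext; simp
  map_smul' x y := by ext; simp
  invFun := mkc
  left_inv z := sum_ic_co z
  right_inv x := by ext s; exact co_mkc x s

theorem koszulD_tmul {g k : ℕ} (T : Fin g → Module.End ℂ M) (x : M) (ω : ExtPow g k) :
    koszulD g T k (kt x ω) =
      ∑ j, kt (T j x) (wedgeBasis g k j ω) := by
  have : ∀ (ι : Type) (S : Finset ι) (F : ι → (KCochain M g k →ₗ[ℂ] KCochain M g (k + 1))) (z),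
      (∑ j ∈ S, F j) z = ∑ j ∈ S, F j z := fun ι S F z => LinearMap.sum_apply S F z
  exact this (Fin g) Finset.univ
    (fun j => TensorProduct.map (T j) (wedgeBasis g k j)) (kt x ω)

theorem co_koszulD {g k : ℕ} (T : Fin g → Module.End ℂ M) (z : KCochain M g k)
    (s : Set.powersetCard (Fin g) (k + 1)) :
    co s (koszulD g T k z) = ∑ j, ∑ s', wc j s s' • T j (co s' z) := by
  conv_lhs => rw [← sum_ic_co z, map_sum, map_sum]
  rw [Finset.sum_comm]
  refine Finset.sum_congr rfl fun s' _ => ?_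
  rw [ic_apply, koszulD_tmul, map_sum]
  refine Finset.sum_congr rfl fun j _ => ?_
  rw [co_tmul]; rfl

theorem wedge_wedge {g k : ℕ} (i j : Fin g) (ω : ExtPow g k) :
    wedgeBasis g (k + 1) i (wedgeBasis g k j ω) = - wedgeBasis g (k + 1) j (wedgeBasis g k i ω) := by
  apply Subtype.ext
  change ExteriorAlgebra.ι ℂ (Pi.single i (1 : ℂ)) * (ExteriorAlgebra.ι ℂ (Pi.single j (1 : ℂ)) * ω.1) =
    - (ExteriorAlgebra.ι ℂ (Pi.single j (1 : ℂ)) * (ExteriorAlgebra.ι ℂ (Pi.single i (1 : ℂ)) * ω.1))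
  rw [← mul_assoc, ← mul_assoc, ← neg_mul]
  congr 1
  rw [eq_neg_iff_add_eq_zero]
  exact ExteriorAlgebra.ι_add_mul_swap _ _

theorem koszulD_sq {g k : ℕ} (T : Fin g → Module.End ℂ M) (hT : ∀ i j x, T i (T j x) = T j (T i x))
    (z : KCochain M g k) : koszulD g T (k + 1) (koszulD g T k z) = 0 := by
  induction z using kc_ind with
  | h0 => simp
  | ha x y hx hy => rw [map_add, map_add, hx, hy, add_zero]
  | ht x ω =>
    have key : koszulD g T (k + 1) (koszulD g T k (kt x ω)) =
        - koszulD g T (k + 1) (koszulD g T k (kt x ω)) := by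
      rw [koszulD_tmul, map_sum]
      simp only [koszulD_tmul]
      conv_rhs => rw [Finset.sum_comm]
      rw [← Finset.sum_neg_distrib]
      refine Finset.sum_congr rfl fun i _ => ?_
      rw [← Finset.sum_neg_distrib]
      refine Finset.sum_congr rfl fun j _ => ?_
      rw [wedge_wedge, hT]
      rw [map_neg]
    have h2 : (2 : ℂ) • koszulD g T (k + 1) (koszulD g T k (kt x ω)) = 0 := by
      rw [two_smul]
      nth_rewrite 1 [key]
      exact neg_add_cancel _
    exact (smul_eq_zero.1 h2).resolve_left two_ne_zero

theorem koszulD_into {g k : ℕ} (T : Fin g → Module.End ℂ M)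
    (hT : ∀ i j x, T i (T j x) = T j (T i x)) (z : KCochain M g (k - 1)) :
    koszulD g T k (koszulDInto g T k z) = 0 := by
  cases k with
  | zero => simp [koszulDInto]
  | succ k => exact koszulD_sq T hT z

/-- Functoriality of cochains. -/
def mapC (g k : ℕ) (φ : M →ₗ[ℂ] N) : KCochain M g k →ₗ[ℂ] KCochain N g k :=
  LinearMap.rTensor (ExtPow g k) φ

theorem co_mapC {g k : ℕ} (φ : M →ₗ[ℂ] N) (z : KCochain M g k) (s) :
    co s (mapC g k φ z) = φ (co s z) := by
  induction z using kc_ind with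
  | h0 => simp
  | ha x y hx hy => rw [map_add, map_add, hx, hy, map_add, map_add]
  | ht x ω =>
    rw [co_tmul, map_smul]
    exact co_tmul s (φ x) ω

theorem mapC_koszulD {g k : ℕ} (φ : M →ₗ[ℂ] N) (T : Fin g → Module.End ℂ M)
    (T' : Fin g → Module.End ℂ N) (h : ∀ j x, φ (T j x) = T' j (φ x)) (z : KCochain M g k) :
    mapC g (k + 1) φ (koszulD g T k z) = koszulD g T' k (mapC g k φ z) := by
  refine co_ext fun s => ?_
  rw [co_mapC, co_koszulD, co_koszulD]
  simp only [map_sum, map_smul, h, co_mapC]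

theorem mapC_into {g k : ℕ} (φ : M →ₗ[ℂ] N) (T : Fin g → Module.End ℂ M)
    (T' : Fin g → Module.End ℂ N) (h : ∀ j x, φ (T j x) = T' j (φ x))
    (z : KCochain M g (k - 1)) :
    mapC g k φ (koszulDInto g T k z) = koszulDInto g T' k (mapC g (k - 1) φ z) := by
  cases k with
  | zero => simp [koszulDInto]
  | succ k => exact mapC_koszulD φ T _ h z

/-! Contraction -/

theorem contract_zero {g : ℕ} (δ : Module.Dual ℂ (Fin g → ℂ)) {ω : ExteriorAlgebra ℂ (Fin g → ℂ)}
    (h : ω ∈ ExtPow g 0) : CliffordAlgebra.contractLeft δ ω = 0 := by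
  have h1 : ω ∈ (1 : Submodule ℂ (ExteriorAlgebra ℂ (Fin g → ℂ))) := by
    have : ExtPow g 0 = 1 := pow_zero _
    rwa [this] at h
  obtain ⟨r, rfl⟩ := Submodule.mem_one.1 h1
  exact CliffordAlgebra.contractLeft_algebraMap _ _ _

theorem contract_mem {g : ℕ} (δ : Module.Dual ℂ (Fin g → ℂ)) (k : ℕ) :
    ∀ {ω : ExteriorAlgebra ℂ (Fin g → ℂ)},
    ω ∈ ExtPow g (k + 1) → (CliffordAlgebra.contractLeft δ ω : ExteriorAlgebra ℂ (Fin g → ℂ)) ∈ ExtPow g k := by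
  induction k with
  | zero =>
    intro ω h
    have h1 : ω ∈ LinearMap.range (ExteriorAlgebra.ι ℂ (M := Fin g → ℂ)) := by
      have : ExtPow g (0 + 1) = LinearMap.range (ExteriorAlgebra.ι ℂ (M := Fin g → ℂ)) := pow_one _
      rwa [this] at h
    obtain ⟨v, rfl⟩ := h1
    have h2 : (CliffordAlgebra.contractLeft δ (ExteriorAlgebra.ι ℂ v) : ExteriorAlgebra ℂ (Fin g → ℂ)) =
      algebraMap ℂ _ (δ v) := CliffordAlgebra.contractLeft_ι _ _ _
    rw [h2]
    have : ExtPow g 0 = 1 := pow_zero _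
    rw [this]
    exact Submodule.mem_one.2 ⟨_, rfl⟩
  | succ k ih =>
    intro ω h
    have hp : ExtPow g (k + 1 + 1) = LinearMap.range (ExteriorAlgebra.ι ℂ (M := Fin g → ℂ)) * ExtPow g (k + 1) :=
      pow_succ' _ _
    have hp' : ExtPow g (k + 1) = LinearMap.range (ExteriorAlgebra.ι ℂ (M := Fin g → ℂ)) * ExtPow g k :=
      pow_succ' _ _
    rw [hp] at h
    induction h using Submodule.mul_induction_on' with
    | mem_mul_mem x hx y hy =>
      obtain ⟨v, rfl⟩ := hx
      have h2 : (CliffordAlgebra.contractLeft δ (ExteriorAlgebra.ι ℂ v * y) : ExteriorAlgebra ℂ (Fin g → ℂ)) =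
        δ v • y - ExteriorAlgebra.ι ℂ v * CliffordAlgebra.contractLeft δ y :=
          CliffordAlgebra.contractLeft_ι_mul _ _ _
      rw [h2]
      refine Submodule.sub_mem _ (Submodule.smul_mem _ _ hy) ?_
      rw [hp']
      exact Submodule.mul_mem_mul ⟨v, rfl⟩ (ih hy)
    | add x hx y hy h1 h2 => rw [map_add]; exact Submodule.add_mem _ h1 h2

/-- Contraction with a dual basis vector. -/
def contr (g k : ℕ) (j : Fin g) : ExtPow g (k + 1) →ₗ[ℂ] ExtPow g k :=
  LinearMap.restrict (CliffordAlgebra.contractLeft (Q := (0 : QuadraticForm ℂ (Fin g → ℂ)))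
    (LinearMap.proj j)) (fun _ hx => contract_mem _ k hx)

theorem contr_wedge {g k : ℕ} (i j : Fin g) (ω : ExtPow g (k + 1)) :
    contr g (k + 1) j (wedgeBasis g (k + 1) i ω) =
      (if i = j then ω else 0) - wedgeBasis g k i (contr g k j ω) := by
  apply Subtype.ext
  have h2 : (CliffordAlgebra.contractLeft (LinearMap.proj j : Module.Dual ℂ (Fin g → ℂ)) (ExteriorAlgebra.ι ℂ (Pi.single i (1 : ℂ)) * ω.1) : ExteriorAlgebra ℂ (Fin g → ℂ)) =
        (LinearMap.proj j : Module.Dual ℂ (Fin g → ℂ)) (Pi.single i (1 : ℂ)) • ω.1 - ExteriorAlgebra.ι ℂ (Pi.single i (1 : ℂ)) * CliffordAlgebra.contractLeft (LinearMap.proj j) ω.1 :=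
          CliffordAlgebra.contractLeft_ι_mul _ _ _
  refine Eq.trans h2 ?_
  rw [AddSubgroupClass.coe_sub]
  congr 1
  by_cases h : i = j
  · subst h; simp
  · rw [if_neg h]
    simp [Pi.single_apply, Ne.symm h]

theorem contr_wedge_zero {g : ℕ} (i j : Fin g) (ω : ExtPow g 0) :
    contr g 0 j (wedgeBasis g 0 i ω) = if i = j then ω else 0 := by
  apply Subtype.ext
  have h2 : (CliffordAlgebra.contractLeft (LinearMap.proj j : Module.Dual ℂ (Fin g → ℂ)) (ExteriorAlgebra.ι ℂ (Pi.single i (1 : ℂ)) * ω.1) : ExteriorAlgebra ℂ (Fin g → ℂ)) =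
        (LinearMap.proj j : Module.Dual ℂ (Fin g → ℂ)) (Pi.single i (1 : ℂ)) • ω.1 - ExteriorAlgebra.ι ℂ (Pi.single i (1 : ℂ)) * CliffordAlgebra.contractLeft (LinearMap.proj j) ω.1 :=
          CliffordAlgebra.contractLeft_ι_mul _ _ _
  refine Eq.trans h2 ?_
  rw [contract_zero _ ω.2, mul_zero, sub_zero]
  by_cases h : i = j
  · subst h; simp
  · rw [if_neg h]
    simp [Pi.single_apply, Ne.symm h]

/-- The contraction homotopy. -/
def hty (M : Type) [AddCommGroup M] [Module ℂ M] (g k : ℕ) (j : Fin g) :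
    KCochain M g (k + 1) →ₗ[ℂ] KCochain M g k :=
  LinearMap.lTensor M (contr g k j)

theorem hty_tmul {g k : ℕ} (j : Fin g) (x : M) (ω : ExtPow g (k + 1)) :
    hty M g k j (kt x ω) =
      kt x (contr g k j ω) := rfl

theorem mapC_tmul {g k : ℕ} (φ : M →ₗ[ℂ] N) (x : M) (ω : ExtPow g k) :
    mapC g k φ (kt x ω) = kt (φ x) ω := rfl

theorem hty_succ {g k : ℕ} (T : Fin g → Module.End ℂ M) (j : Fin g) (z : KCochain M g (k + 1)) :
    koszulD g T k (hty M g k j z) + hty M g (k + 1) j (koszulD g T (k + 1) z) =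
      mapC g (k + 1) (T j) z := by
  classical
  induction z using kc_ind with
  | h0 => simp
  | ha x y hx hy => simp only [map_add]; rw [← hx, ← hy]; abel
  | ht x ω =>
    rw [hty_tmul, koszulD_tmul, koszulD_tmul, map_sum, mapC_tmul]
    simp only [hty_tmul, contr_wedge]
    refine Eq.trans (Finset.sum_add_distrib).symm ?_
    have : ∀ i : Fin g, kt (T i x) (wedgeBasis g k i (contr g k j ω)) +
        kt (T i x) ((if i = j then ω else 0) - wedgeBasis g k i (contr g k j ω)) =
        if i = j then kt (T j x) ω else 0 := by
      intro i
      rw [← map_add, add_sub_cancel]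
      split_ifs with h
      · rw [h]
      · simp
    refine Eq.trans (Finset.sum_congr rfl fun i _ => this i) ?_
    simp

theorem hty_zero {g : ℕ} (T : Fin g → Module.End ℂ M) (j : Fin g) (z : KCochain M g 0) :
    hty M g 0 j (koszulD g T 0 z) = mapC g 0 (T j) z := by
  classical
  induction z using kc_ind with
  | h0 => simp
  | ha x y hx hy => simp only [map_add]; rw [← hx, ← hy]
  | ht x ω =>
    rw [koszulD_tmul, map_sum, mapC_tmul]
    simp only [hty_tmul, contr_wedge_zero]
    have : ∀ i : Fin g, kt (T i x) (if i = j then ω else 0) =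
        if i = j then kt (T j x) ω else 0 := by
      intro i
      split_ifs with h
      · rw [h]
      · simp
    refine Eq.trans (Finset.sum_congr rfl fun i _ => this i) ?_
    simp

/-- The operators act by zero on cohomology. -/
theorem T_closed_exact {g k : ℕ} (T : Fin g → Module.End ℂ M) (j : Fin g) (z : KCochain M g k)
    (hz : koszulD g T k z = 0) : mapC g k (T j) z ∈ LinearMap.range (koszulDInto g T k) := by
  cases k with
  | zero =>
    rw [← hty_zero, hz, map_zero]; exact Submodule.zero_mem _
  | succ k =>
    rw [← hty_succ, hz, map_zero, add_zero]
    exact ⟨hty M g k j z, rfl⟩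

theorem kc_subsingleton {g k : ℕ} (h : g < k) (z : KCochain M g k) : z = 0 := by
  refine co_ext fun s => ?_
  have h1 : s.1.card = k := s.2
  have := Finset.card_le_univ s.1
  simp at this
  omega

end coords


theorem exists_phi {M : Type} [AddCommGroup M] [Module ℂ M] {g : ℕ} (T : Fin g → Module.End ℂ M)
    (hT : ∀ i j x, T i (T j x) = T j (T i x)) :
    ∃ φ : MvPolynomial (Fin g) ℂ →ₐ[ℂ] Module.End ℂ M, ∀ j, φ (X j) = T j := by
  have hc : ∀ a ∈ Set.range T, ∀ b ∈ Set.range T, a * b = b * a := by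
    rintro _ ⟨i, rfl⟩ _ ⟨j, rfl⟩
    ext x
    exact hT i j x
  letI : CommRing (Algebra.adjoin ℂ (Set.range T)) := Algebra.adjoinCommRingOfComm ℂ hc
  refine ⟨(Algebra.adjoin ℂ (Set.range T)).val.comp (MvPolynomial.aeval (R := ℂ)
    (S₁ := Algebra.adjoin ℂ (Set.range T))
    (fun j => (⟨T j, Algebra.subset_adjoin ⟨j, rfl⟩⟩ : Algebra.adjoin ℂ (Set.range T)))), ?_⟩
  intro j
  rw [AlgHom.comp_apply]
  erw [MvPolynomial.aeval_X]
  rfl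

theorem phi_comm {M : Type} [AddCommGroup M] [Module ℂ M] {g : ℕ} {T : Fin g → Module.End ℂ M}
    {φ : MvPolynomial (Fin g) ℂ →ₐ[ℂ] Module.End ℂ M} (hφ : ∀ j, φ (X j) = T j)
    (p : MvPolynomial (Fin g) ℂ) (j : Fin g) (x : M) : φ p (T j x) = T j (φ p x) := by
  rw [← hφ, ← Module.End.mul_apply, ← Module.End.mul_apply, ← map_mul, ← map_mul, mul_comm]

theorem poly_decomp {g : ℕ} (p : MvPolynomial (Fin g) ℂ) :
    ∃ (c : ℂ) (q : Fin g → MvPolynomial (Fin g) ℂ), p = C c + ∑ j, X j * q j := by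
  induction p using MvPolynomial.induction_on with
  | C a => exact ⟨a, 0, by simp⟩
  | add p q hp hq =>
    obtain ⟨c, u, hu⟩ := hp
    obtain ⟨c', u', hu'⟩ := hq
    refine ⟨c + c', u + u', ?_⟩
    conv_lhs => rw [hu, hu']
    simp only [map_add, Pi.add_apply, mul_add, Finset.sum_add_distrib]
    ring
  | mul_X p i hp =>
    refine ⟨0, Pi.single i p, ?_⟩
    rw [Finset.sum_eq_single i]
    · simp [mul_comm]
    · intro j _ h; simp [Pi.single_eq_of_ne h]
    · simp

theorem fin_closed {M : Type} [AddCommGroup M] [Module ℂ M] {g : ℕ} (k : ℕ)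
    (T : Fin g → Module.End ℂ M)
    (hT : ∀ i j x, T i (T j x) = T j (T i x)) (F : Submodule ℂ M) (hF : F.FG)
    (h : ∀ W : Submodule ℂ M, F ≤ W → (∀ j, ∀ x ∈ W, T j x ∈ W) → W = ⊤) :
    ∃ G : Finset (KCochain M g k), ∀ z, koszulD g T k z = 0 →
      ∃ y ∈ Submodule.span ℂ (G : Set (KCochain M g k)), z - y ∈ LinearMap.range (koszulDInto g T k) := by
  obtain ⟨φ, hφ⟩ := exists_phi T hT
  letI : Module (MvPolynomial (Fin g) ℂ) M := Module.compHom M (φ : MvPolynomial (Fin g) ℂ →+* Module.End ℂ M)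
  have hsm : ∀ (p : MvPolynomial (Fin g) ℂ) (x : M), p • x = φ p x := fun p x => rfl
  -- finiteness of M
  have hfinM : Module.Finite (MvPolynomial (Fin g) ℂ) M := by
    obtain ⟨B, hB⟩ := hF
    refine ⟨⟨B, ?_⟩⟩
    let W : Submodule ℂ M :=
      { carrier := (Submodule.span (MvPolynomial (Fin g) ℂ) (B : Set M) : Set M)
        add_mem' := fun a b => Submodule.add_mem _ a b
        zero_mem' := Submodule.zero_mem _
        smul_mem' := fun c x hx => by
          have : c • x = (C c : MvPolynomial (Fin g) ℂ) • x := by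
            rw [hsm, ← MvPolynomial.algebraMap_eq, AlgHom.commutes]; rfl
          rw [this]
          exact Submodule.smul_mem (Submodule.span (MvPolynomial (Fin g) ℂ) (B : Set M)) _ hx }
    have hW : W = ⊤ := by
      apply h
      · rw [← hB, Submodule.span_le]
        intro x hx
        exact Submodule.subset_span hx
      · intro j x hx
        have : T j x = (X j : MvPolynomial (Fin g) ℂ) • x := by rw [hsm, hφ]
        rw [this]
        exact Submodule.smul_mem (Submodule.span (MvPolynomial (Fin g) ℂ) (B : Set M)) _ hx
    rw [eq_top_iff]
    intro x _
    have : x ∈ W := by rw [hW]; trivial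
    exact this
  let Z : Submodule (MvPolynomial (Fin g) ℂ) (Set.powersetCard (Fin g) k → M) :=
    { carrier := {v | koszulD g T k ((coEquiv M g k).symm v) = 0}
      add_mem' := fun {a b} ha hb => by
        have ha : koszulD g T k ((coEquiv M g k).symm a) = 0 := ha
        have hb : koszulD g T k ((coEquiv M g k).symm b) = 0 := hb
        show koszulD g T k ((coEquiv M g k).symm (a+b)) = 0
        rw [map_add, map_add, ha, hb, add_zero]
      zero_mem' := by
        show koszulD g T k ((coEquiv M g k).symm 0) = 0
        rw [map_zero, map_zero]
      smul_mem' := fun p x hx => by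
        have hx : koszulD g T k ((coEquiv M g k).symm x) = 0 := hx
        show koszulD g T k ((coEquiv M g k).symm (p • x)) = 0
        have : (coEquiv M g k).symm (p • x) = mapC g k (φ p) ((coEquiv M g k).symm x) := by
          apply co_ext
          intro s
          rw [co_mapC]
          exact (co_mkc _ _).trans (congrArg (φ p) (co_mkc x s).symm)
        rw [this, ← mapC_koszulD (φ p) T T (fun j x => phi_comm hφ p j x), hx, map_zero] }
  have hZ : Z.FG := IsNoetherian.noetherian Z
  obtain ⟨G, hG⟩ := hZ
  classical
  refine ⟨G.image (coEquiv M g k).symm, ?_⟩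
  have key : ∀ v ∈ Z, ∃ y ∈ Submodule.span ℂ ((G.image (coEquiv M g k).symm : Finset _) : Set (KCochain M g k)),
      (coEquiv M g k).symm v - y ∈ LinearMap.range (koszulDInto g T k) := by
    intro v hv
    rw [← hG] at hv
    refine Submodule.span_induction ?_ ?_ ?_ ?_ hv
    · intro x hx
      refine ⟨_, Submodule.subset_span (Finset.mem_coe.2 (Finset.mem_image_of_mem _ hx)), ?_⟩
      rw [sub_self]; exact zero_mem _
    · refine ⟨0, zero_mem _, ?_⟩
      rw [map_zero, sub_self]; exact zero_mem _
    · rintro a b - - ⟨y, hy, hy'⟩ ⟨z, hz, hz'⟩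
      refine ⟨y + z, add_mem hy hz, ?_⟩
      rw [map_add, add_sub_add_comm]
      exact add_mem hy' hz'
    · rintro p a ha ⟨y, hy, hy'⟩
      rw [hG] at ha
      obtain ⟨c, q, hp⟩ := poly_decomp p
      refine ⟨c • y, Submodule.smul_mem _ _ hy, ?_⟩
      have h1 : (coEquiv M g k).symm (p • a) = c • (coEquiv M g k).symm a +
          ∑ j, mapC g k (T j) ((coEquiv M g k).symm (q j • a)) := by
        apply co_ext
        intro s
        rw [map_add, map_sum, LinearMap.map_smul (co s) c]
        simp only [co_mapC]
        have hco : ∀ v : Set.powersetCard (Fin g) k → M, co s ((coEquiv M g k).symm v) = v s :=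
          fun v => co_mkc v s
        simp only [hco]
        show p • a s = c • a s + ∑ j, T j (q j • a s)
        conv_lhs => rw [hp]
        rw [add_smul, Finset.sum_smul]
        congr 1
        · rw [hsm, ← MvPolynomial.algebraMap_eq, AlgHom.commutes]; rfl
        · apply Finset.sum_congr rfl
          intro j _
          rw [mul_smul, hsm (X j), hφ]
      rw [h1, add_sub_right_comm, ← smul_sub]
      refine add_mem (Submodule.smul_mem _ _ hy') (Submodule.sum_mem _ fun j _ => ?_)
      exact T_closed_exact T j _ (Z.smul_mem (q j) ha)
  intro z hz
  have := key (coEquiv M g k z) (by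
    show koszulD g T k ((coEquiv M g k).symm (coEquiv M g k z)) = 0
    rw [LinearEquiv.symm_apply_apply, hz])
  rwa [LinearEquiv.symm_apply_apply] at this


/-- weight of an index -/
def es {g k : ℕ} (e : Fin g → ℕ) (s : Set.powersetCard (Fin g) k) : ℤ := ∑ i ∈ s.1, (e i : ℤ)

theorem es_nonneg {g k : ℕ} (e : Fin g → ℕ) (s : Set.powersetCard (Fin g) k) : 0 ≤ es e s :=
  Finset.sum_nonneg fun _ _ => by positivity

theorem es_insert {g k : ℕ} (e : Fin g → ℕ) {j : Fin g} {s : Set.powersetCard (Fin g) (k+1)}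
    {s' : Set.powersetCard (Fin g) k} (h : wc j s s' ≠ 0) : es e s = es e s' + e j := by
  obtain ⟨h1, h2⟩ := wc_ne h
  unfold es
  rw [h2, Finset.sum_insert h1, add_comm]

/-- derivations as endomorphisms -/
def DE {m g : ℕ} (D : Fin g → Derivation ℂ (MvPolynomial (Fin m) ℂ) (MvPolynomial (Fin m) ℂ))
    (j : Fin g) : Module.End ℂ (MvPolynomial (Fin m) ℂ) := (D j).toLinearMap

@[simp] theorem DE_apply {m g : ℕ} (D : Fin g → Derivation ℂ (MvPolynomial (Fin m) ℂ) (MvPolynomial (Fin m) ℂ))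
    (j : Fin g) (x) : DE D j x = D j x := rfl

/-- homogeneous projection on cochains -/
def prC {m : ℕ} (w : Fin m → ℕ) {g : ℕ} (e : Fin g → ℕ) {k : ℕ} (n : ℤ)
    (z : KCochain (MvPolynomial (Fin m) ℂ) g k) : KCochain (MvPolynomial (Fin m) ℂ) g k :=
  mkc fun s => wcmp w (n + es e s) (co s z)

theorem co_prC {m : ℕ} (w : Fin m → ℕ) {g : ℕ} (e : Fin g → ℕ) {k : ℕ} (n : ℤ)
    (z : KCochain (MvPolynomial (Fin m) ℂ) g k) (s) :
    co s (prC w e n z) = wcmp w (n + es e s) (co s z) := co_mkc _ _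

theorem prC_koszulD {m : ℕ} {w : Fin m → ℕ} {g : ℕ} {e : Fin g → ℕ} {k : ℕ}
    (D : Fin g → Derivation ℂ (MvPolynomial (Fin m) ℂ) (MvPolynomial (Fin m) ℂ))
    (hD : ∀ (j : Fin g) (n : ℕ) (x : MvPolynomial (Fin m) ℂ),
      x.IsWeightedHomogeneous w n → (D j x).IsWeightedHomogeneous w (n + e j)) (n : ℤ)
    (z : KCochain (MvPolynomial (Fin m) ℂ) g k) :
    prC w e n (koszulD g (DE D) k z) = koszulD g (DE D) k (prC w e n z) := by
  apply co_ext
  intro s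
  rw [co_prC, co_koszulD, co_koszulD, map_sum]
  refine Finset.sum_congr rfl fun j _ => ?_
  rw [map_sum]
  refine Finset.sum_congr rfl fun s' _ => ?_
  rw [map_smul, co_prC, DE_apply, DE_apply, wcmp_D (D j) (e j) (hD j)]
  by_cases h : wc j s s' = 0
  · rw [h, zero_smul, zero_smul]
  · rw [es_insert e h]
    congr 4
    ring

theorem prC_into {m : ℕ} {w : Fin m → ℕ} {g : ℕ} {e : Fin g → ℕ} {k : ℕ}
    (D : Fin g → Derivation ℂ (MvPolynomial (Fin m) ℂ) (MvPolynomial (Fin m) ℂ))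
    (hD : ∀ (j : Fin g) (n : ℕ) (x : MvPolynomial (Fin m) ℂ),
      x.IsWeightedHomogeneous w n → (D j x).IsWeightedHomogeneous w (n + e j)) (n : ℤ)
    (z : KCochain (MvPolynomial (Fin m) ℂ) g (k-1)) :
    prC w e n (koszulDInto g (DE D) k z) = koszulDInto g (DE D) k (prC w e n z) := by
  cases k with
  | zero =>
    apply co_ext
    intro s
    rw [co_prC]
    simp [koszulDInto]
  | succ k => exact prC_koszulD D hD n z

/-- filtration on cochains -/
def FC {m : ℕ} (w : Fin m → ℕ) {g : ℕ} (e : Fin g → ℕ) (J : Ideal (MvPolynomial (Fin m) ℂ)) (k : ℕ) (n : ℤ) :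
    Submodule ℂ (KCochain (MvPolynomial (Fin m) ℂ ⧸ J) g k) :=
  ⨅ s : Set.powersetCard (Fin g) k, (FJ w J (n + es e s)).comap (co s)

theorem mem_FC {m : ℕ} {w : Fin m → ℕ} {g : ℕ} {e : Fin g → ℕ} {J : Ideal (MvPolynomial (Fin m) ℂ)} {k : ℕ} {n : ℤ}
    {z : KCochain (MvPolynomial (Fin m) ℂ ⧸ J) g k} : z ∈ FC w e J k n ↔ ∀ s, co s z ∈ FJ w J (n + es e s) := by
  simp [FC, Submodule.mem_iInf]

theorem FC_mono {m : ℕ} (w : Fin m → ℕ) {g : ℕ} (e : Fin g → ℕ) (J : Ideal (MvPolynomial (Fin m) ℂ)) (k : ℕ) {n n' : ℤ}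
    (h : n ≤ n') : FC w e J k n ≤ FC w e J k n' := fun z hz =>
  mem_FC.2 fun s => Submodule.map_mono (FR_mono w (by lia)) (mem_FC.1 hz s)

theorem exists_FR_all {m : ℕ} (w : Fin m → ℕ) {ι : Type*} [Finite ι] (x : ι → MvPolynomial (Fin m) ℂ) :
    ∃ N : ℕ, ∀ i, x i ∈ FR w N := by
  cases nonempty_fintype ι
  choose N hN using fun i => exists_mem_FR w (x i)
  refine ⟨∑ i, N i, fun i => FR_mono w ?_ (hN i)⟩
  exact_mod_cast Finset.single_le_sum (f := N) (fun _ _ => Nat.zero_le _) (Finset.mem_univ i)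

theorem exists_FC {m : ℕ} (w : Fin m → ℕ) {g : ℕ} (e : Fin g → ℕ) (J : Ideal (MvPolynomial (Fin m) ℂ)) (k : ℕ)
    (z : KCochain (MvPolynomial (Fin m) ℂ ⧸ J) g k) : ∃ N : ℕ, z ∈ FC w e J k N := by
  choose x hx using fun s => qmk_surj J (co s z)
  obtain ⟨N, hN⟩ := exists_FR_all w x
  refine ⟨N, mem_FC.2 fun s => ⟨x s, FR_mono w ?_ (hN s), hx s⟩⟩
  have := es_nonneg e s
  lia

theorem FR_D {m : ℕ} {w : Fin m → ℕ} (D : Derivation ℂ (MvPolynomial (Fin m) ℂ) (MvPolynomial (Fin m) ℂ)) (e : ℕ)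
    (hD : ∀ (n : ℕ) (x : MvPolynomial (Fin m) ℂ), IsWeightedHomogeneous w x n → IsWeightedHomogeneous w (D x) (n + e))
    {n : ℤ} {p : MvPolynomial (Fin m) ℂ} (hp : p ∈ FR w n) : D p ∈ FR w (n + e) := by
  rw [mem_FR] at *
  intro k hk
  rw [wcmp_D D e hD, hp _ (by lia), map_zero]

theorem lift_C {m : ℕ} (J : Ideal (MvPolynomial (Fin m) ℂ)) {g k : ℕ}
    (z : KCochain (MvPolynomial (Fin m) ℂ ⧸ J) g k) : ∃ z', mapC g k (qmk J) z' = z := by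
  choose x hx using fun s => qmk_surj J (co s z)
  refine ⟨mkc x, co_ext fun s => ?_⟩
  rw [co_mapC, co_mkc, hx]

theorem lift_FC {m : ℕ} {w : Fin m → ℕ} {g : ℕ} {e : Fin g → ℕ} {J : Ideal (MvPolynomial (Fin m) ℂ)} {k : ℕ} {n : ℤ}
    {z : KCochain (MvPolynomial (Fin m) ℂ ⧸ J) g k} (hz : z ∈ FC w e J k n) :
    ∃ z', mapC g k (qmk J) z' = z ∧ ∀ s, co s z' ∈ FR w (n + es e s) := by
  choose x hx hx' using mem_FC.1 hz
  refine ⟨mkc x, co_ext fun s => ?_, fun s => ?_⟩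
  · rw [co_mapC, co_mkc, hx']
  · rw [co_mkc]; exact hx s

theorem FR_koszulD {m : ℕ} {w : Fin m → ℕ} {g : ℕ} {e : Fin g → ℕ} {k : ℕ}
    (D : Fin g → Derivation ℂ (MvPolynomial (Fin m) ℂ) (MvPolynomial (Fin m) ℂ))
    (hD : ∀ (j : Fin g) (n : ℕ) (x : MvPolynomial (Fin m) ℂ),
      x.IsWeightedHomogeneous w n → (D j x).IsWeightedHomogeneous w (n + e j)) {n : ℤ}
    {z : KCochain (MvPolynomial (Fin m) ℂ) g k} (hz : ∀ s, co s z ∈ FR w (n + es e s)) (s) :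
    co s (koszulD g (DE D) k z) ∈ FR w (n + es e s) := by
  rw [co_koszulD]
  refine Submodule.sum_mem _ fun j _ => Submodule.sum_mem _ fun s' _ => ?_
  by_cases h : wc j s s' = 0
  · rw [h, zero_smul]; exact zero_mem _
  · apply Submodule.smul_mem
    rw [es_insert e h, ← add_assoc]
    exact FR_D (D j) (e j) (hD j) (hz s')

theorem FR_into {m : ℕ} {w : Fin m → ℕ} {g : ℕ} {e : Fin g → ℕ} {k : ℕ}
    (D : Fin g → Derivation ℂ (MvPolynomial (Fin m) ℂ) (MvPolynomial (Fin m) ℂ))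
    (hD : ∀ (j : Fin g) (n : ℕ) (x : MvPolynomial (Fin m) ℂ),
      x.IsWeightedHomogeneous w n → (D j x).IsWeightedHomogeneous w (n + e j)) {n : ℤ}
    {z : KCochain (MvPolynomial (Fin m) ℂ) g (k-1)} (hz : ∀ s, co s z ∈ FR w (n + es e s)) (s) :
    co s (koszulDInto g (DE D) k z) ∈ FR w (n + es e s) := by
  cases k with
  | zero => simp [koszulDInto]
  | succ k => exact FR_koszulD D hD hz s

theorem FC_into {m : ℕ} {w : Fin m → ℕ} {g : ℕ} {e : Fin g → ℕ} {k : ℕ}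
    (D : Fin g → Derivation ℂ (MvPolynomial (Fin m) ℂ) (MvPolynomial (Fin m) ℂ))
    (hD : ∀ (j : Fin g) (n : ℕ) (x : MvPolynomial (Fin m) ℂ),
      x.IsWeightedHomogeneous w n → (D j x).IsWeightedHomogeneous w (n + e j))
    {J : Ideal (MvPolynomial (Fin m) ℂ)} {T : Fin g → Module.End ℂ (MvPolynomial (Fin m) ℂ ⧸ J)}
    (hT : ∀ j x, T j (qmk J x) = qmk J (D j x)) {n : ℤ}
    {z : KCochain (MvPolynomial (Fin m) ℂ ⧸ J) g (k-1)} (hz : z ∈ FC w e J (k-1) n) :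
    koszulDInto g T k z ∈ FC w e J k n := by
  obtain ⟨z', rfl, h2⟩ := lift_FC hz
  rw [← mapC_into (qmk J) (DE D) T (fun j x => (hT j x).symm)]
  refine mem_FC.2 fun s => ?_
  rw [co_mapC]
  exact ⟨_, FR_into D hD h2 s, rfl⟩

/-- graded Nakayama -/
theorem nakayama {m : ℕ} {w : Fin m → ℕ} (hw : ∀ i, 0 < w i) {g : ℕ} {e : Fin g → ℕ} (he : ∀ j, 0 < e j)
    (D : Fin g → Derivation ℂ (MvPolynomial (Fin m) ℂ) (MvPolynomial (Fin m) ℂ))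
    (hD : ∀ (j : Fin g) (n : ℕ) (x : MvPolynomial (Fin m) ℂ),
      x.IsWeightedHomogeneous w n → (D j x).IsWeightedHomogeneous w (n + e j))
    {I : Ideal (MvPolynomial (Fin m) ℂ)} (hI : HomI w I) {T : Fin g → Module.End ℂ (MvPolynomial (Fin m) ℂ ⧸ I)}
    (hT : ∀ j x, T j (qmk I x) = qmk I (D j x))
    (hfin : FiniteDimensional ℂ ((MvPolynomial (Fin m) ℂ ⧸ I) ⧸ (⨆ j : Fin g, LinearMap.range (T j)))) :
    ∃ F : Submodule ℂ (MvPolynomial (Fin m) ℂ ⧸ I), F.FG ∧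
      ∀ W : Submodule ℂ (MvPolynomial (Fin m) ℂ ⧸ I), F ≤ W → (∀ j, ∀ x ∈ W, T j x ∈ W) → W = ⊤ := by
  set Q := (⨆ j : Fin g, LinearMap.range (T j)) with hQ
  obtain ⟨B, hB⟩ := hfin.fg_top
  have hsurj : Function.Surjective (Q.mkQ ∘ₗ qmk I) := Q.mkQ_surjective.comp (qmk_surj I)
  choose x hx using fun b : B => hsurj b.1
  obtain ⟨N, hN⟩ := exists_FR_all w x
  refine ⟨FJ w I N, (Submodule.fg_top _).1 (FJ_finite hw I N).fg_top, ?_⟩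
  intro W hF hW
  have hsum : ∀ p, ∃ y ∈ FR w N, ∃ u : Fin g → MvPolynomial (Fin m) ℂ, p - y - ∑ j, D j (u j) ∈ I := by
    intro p
    have h1 : (FR w N).map (Q.mkQ ∘ₗ qmk I) = ⊤ := by
      rw [eq_top_iff, ← hB, Submodule.span_le]
      intro b hb
      exact ⟨x ⟨b, hb⟩, hN _, hx ⟨b, hb⟩⟩
    have h2 : (Q.mkQ ∘ₗ qmk I) p ∈ (FR w N).map (Q.mkQ ∘ₗ qmk I) := by rw [h1]; trivial
    obtain ⟨y, hy, hyp⟩ := h2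
    refine ⟨y, hy, ?_⟩
    have h3 : qmk I p - qmk I y ∈ Q := by
      rw [← Submodule.Quotient.eq]
      exact hyp.symm
    rw [hQ, Submodule.mem_iSup_iff_exists_finsupp] at h3
    obtain ⟨v, hv, hv'⟩ := h3
    choose v' hv'' using hv
    choose u hu using fun j => qmk_surj I (v' j)
    refine ⟨u, ?_⟩
    rw [← qmk_eq_zero, map_sub, map_sub, map_sum, ← hv', sub_eq_zero, Finsupp.sum_fintype _ _ (fun _ => rfl)]
    refine Finset.sum_congr rfl fun j _ => ?_
    rw [← hT, hu, hv'']
  have hhom : ∀ n : ℕ, ∀ p ∈ Rn w n, qmk I p ∈ W := by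
    intro n
    induction n using Nat.strong_induction_on with
    | _ n ih =>
      intro p hp
      by_cases hn : n ≤ N
      · exact hF ⟨p, FR_mono w (by exact_mod_cast hn) (Rn_le_FR w n hp), rfl⟩
      · obtain ⟨y, hy, u, hu⟩ := hsum p
        have h1 := hI n _ hu
        rw [map_sub, map_sub, mem_Rn.1 hp, mem_FR.1 hy n (by lia), sub_zero, map_sum] at h1
        rw [← qmk_eq] at h1
        rw [h1, map_sum]
        refine Submodule.sum_mem _ fun j _ => ?_
        rw [wcmp_D (D j) (e j) (hD j), ← hT]
        apply hW
        by_cases hj : e j ≤ n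
        · have := ih (n - e j) (by have := he j; lia) (wcmp w ((n - e j : ℕ) : ℤ) (u j)) (wcmp_mem_Rn _ _ _)
          rwa [Nat.cast_sub hj] at this
        · have := wcmp_mem_Rn w ((n : ℤ) - e j) (u j)
          rw [Rn_neg w (by lia)] at this
          rw [(Submodule.mem_bot ℂ).1 this, map_zero]
          exact zero_mem _
  have hall : ∀ n : ℕ, ∀ p ∈ FR w n, qmk I p ∈ W := by
    intro n
    induction n with
    | zero =>
      intro p hp
      have h1 := sub_wcmp_mem hp
      rw [FR_neg w (by simp)] at h1
      rw [sub_eq_zero.1 ((Submodule.mem_bot ℂ).1 h1)]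
      exact hhom 0 _ (wcmp_mem_Rn _ _ _)
    | succ n ih =>
      intro p hp
      have h1 := sub_wcmp_mem hp
      have h2 : ((n + 1 : ℕ) : ℤ) - 1 = n := by simp
      rw [h2] at h1
      have := add_mem (ih _ h1) (hhom (n+1) _ (wcmp_mem_Rn w _ p))
      rwa [← map_add, sub_add_cancel] at this
  rw [eq_top_iff]
  intro q _
  obtain ⟨p, rfl⟩ := qmk_surj I q
  obtain ⟨n, hn⟩ := exists_mem_FR w p
  exact hall n p hn

/-- homogeneous acyclicity in large degree -/
theorem acyc {m : ℕ} {w : Fin m → ℕ} (hw : ∀ i, 0 < w i) {g : ℕ} {e : Fin g → ℕ} (he : ∀ j, 0 < e j)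
    (D : Fin g → Derivation ℂ (MvPolynomial (Fin m) ℂ) (MvPolynomial (Fin m) ℂ))
    (hD : ∀ (j : Fin g) (n : ℕ) (x : MvPolynomial (Fin m) ℂ),
      x.IsWeightedHomogeneous w n → (D j x).IsWeightedHomogeneous w (n + e j))
    (hDc : ∀ i j x, D i (D j x) = D j (D i x))
    {I : Ideal (MvPolynomial (Fin m) ℂ)} (hI : HomI w I) {T : Fin g → Module.End ℂ (MvPolynomial (Fin m) ℂ ⧸ I)}
    (hT : ∀ j x, T j (qmk I x) = qmk I (D j x))
    (hfin : FiniteDimensional ℂ ((MvPolynomial (Fin m) ℂ ⧸ I) ⧸ (⨆ j : Fin g, LinearMap.range (T j)))) (k : ℕ) :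
    ∃ N : ℕ, ∀ n : ℤ, N < n → ∀ z : KCochain (MvPolynomial (Fin m) ℂ) g k, prC w e n z = z →
      (∀ s, co s (koszulD g (DE D) k z) ∈ I) →
      ∃ y, prC w e n y = y ∧ ∀ s, co s (z - koszulDInto g (DE D) k y) ∈ I := by
  obtain ⟨F, hF, hFW⟩ := nakayama hw he D hD hI hT hfin
  have hTc : ∀ i j x, T i (T j x) = T j (T i x) := by
    intro i j x
    obtain ⟨x, rfl⟩ := qmk_surj I x
    simp only [hT, hDc i j]
  obtain ⟨G, hG⟩ := fin_closed k T hTc F hF hFW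
  choose l hl using fun z => lift_C I (g := g) (k := k) z
  obtain ⟨N, hN⟩ := exists_FR_all w (fun p : G × Set.powersetCard (Fin g) k => co p.2 (l p.1))
  refine ⟨N, fun n hn z hz hdz => ?_⟩
  have hcl : koszulD g T k (mapC g k (qmk I) z) = 0 := by
    rw [← mapC_koszulD (qmk I) (DE D) T (fun j x => (hT j x).symm)]
    apply co_ext
    intro s
    rw [co_mapC, map_zero, qmk_eq_zero]
    exact hdz s
  obtain ⟨y, hy, ⟨u, hu⟩⟩ := hG _ hcl
  obtain ⟨u, rfl⟩ := lift_C I u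
  -- lift y
  have hy' : ∃ y', mapC g k (qmk I) y' = y ∧ ∀ s, co s y' ∈ FR w N := by
    refine Submodule.span_induction ?_ ?_ ?_ ?_ hy
    · intro x hx
      exact ⟨l x, hl x, fun s => hN (⟨x, hx⟩, s)⟩
    · exact ⟨0, map_zero _, fun s => by rw [map_zero]; exact zero_mem _⟩
    · rintro a b - - ⟨a', ha, ha'⟩ ⟨b', hb, hb'⟩
      exact ⟨a' + b', by rw [map_add, ha, hb], fun s => by rw [map_add]; exact add_mem (ha' s) (hb' s)⟩
    · rintro c a - ⟨a', ha, ha'⟩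
      exact ⟨c • a', by rw [map_smul, ha], fun s => by rw [map_smul]; exact Submodule.smul_mem _ _ (ha' s)⟩
  obtain ⟨y', rfl, hy'⟩ := hy'
  rw [← mapC_into (qmk I) (DE D) T (fun j x => (hT j x).symm)] at hu
  refine ⟨prC w e n u, ?_, fun s => ?_⟩
  · apply co_ext
    intro s
    rw [co_prC, co_prC, wcmp_idem]
  · have h1 : co s z - co s y' - co s (koszulDInto g (DE D) k u) ∈ I := by
      rw [← qmk_eq_zero, map_sub, map_sub, ← co_mapC, ← co_mapC, ← co_mapC, hu, map_sub, sub_self]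
    have h2 := hI (n + es e s) _ h1
    rw [map_sub, map_sub, ← co_prC, hz, ← co_prC, ← co_prC, prC_into D hD] at h2
    rw [co_prC, mem_FR.1 (hy' s) _ (by have := es_nonneg e s; lia), sub_zero] at h2
    rw [map_sub]
    exact h2

/-- key filtered acyclicity -/
theorem facyc {m : ℕ} {w : Fin m → ℕ} {g : ℕ} {e : Fin g → ℕ}
    (D : Fin g → Derivation ℂ (MvPolynomial (Fin m) ℂ) (MvPolynomial (Fin m) ℂ))
    (hD : ∀ (j : Fin g) (n : ℕ) (x : MvPolynomial (Fin m) ℂ),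
      x.IsWeightedHomogeneous w n → (D j x).IsWeightedHomogeneous w (n + e j))
    {J I : Ideal (MvPolynomial (Fin m) ℂ)} (hG : GrI w J I)
    {T : Fin g → Module.End ℂ (MvPolynomial (Fin m) ℂ ⧸ J)}
    (hT : ∀ j x, T j (qmk J x) = qmk J (D j x)) (k : ℕ) (n : ℤ)
    (hac : ∀ z : KCochain (MvPolynomial (Fin m) ℂ) g k, prC w e n z = z →
      (∀ s, co s (koszulD g (DE D) k z) ∈ I) →
      ∃ y, prC w e n y = y ∧ ∀ s, co s (z - koszulDInto g (DE D) k y) ∈ I)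
    (z : KCochain (MvPolynomial (Fin m) ℂ ⧸ J) g k) (hz : z ∈ FC w e J k n)
    (hdz : koszulD g T k z ∈ FC w e J (k+1) (n-1)) :
    ∃ y ∈ FC w e J (k-1) n, z - koszulDInto g T k y ∈ FC w e J k (n-1) := by
  obtain ⟨z, rfl, hz'⟩ := lift_FC hz
  rw [← mapC_koszulD (qmk J) (DE D) T (fun j x => (hT j x).symm)] at hdz
  obtain ⟨v, hv, hv'⟩ := lift_FC hdz
  obtain ⟨y, hy, hy'⟩ := hac (prC w e n z) (by
      apply co_ext; intro s; rw [co_prC, co_prC, wcmp_idem]) (fun s => by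
    rw [← prC_koszulD D hD, co_prC]
    have h1 : co s (koszulD g (DE D) k z) - co s v ∈ J := by
      rw [← qmk_eq, ← co_mapC, ← co_mapC, hv]
    have h2 : co s (koszulD g (DE D) k z) - co s v ∈ FR w (n + es e s) :=
      sub_mem (FR_koszulD D hD hz' s) (FR_mono w (by lia) (hv' s))
    have h3 := hG.1 _ _ h2 h1
    rwa [map_sub, mem_FR.1 (hv' s) _ (by lia), sub_zero] at h3)
  have hyF : ∀ s, co s y ∈ FR w (n + es e s) := fun s => by
    rw [← hy, co_prC]
    exact Rn_le_FR w _ (wcmp_mem_Rn _ _ _)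
  refine ⟨mapC g (k-1) (qmk J) y, mem_FC.2 fun s => ⟨_, hyF s, (co_mapC _ _ _).symm⟩, ?_⟩
  rw [← mapC_into (qmk J) (DE D) T (fun j x => (hT j x).symm), ← map_sub]
  refine mem_FC.2 fun s => ?_
  rw [co_mapC]
  have hR : co s (prC w e n z - koszulDInto g (DE D) k y) ∈ Rn w (n + es e s) := by
    rw [mem_Rn, map_sub, map_sub, ← co_prC, ← co_prC, prC_into D hD, hy]
    congr 1
    rw [co_prC, co_prC, wcmp_idem]
  obtain ⟨q, hq, hqJ⟩ := hG.2 _ _ hR (hy' s)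
  refine ⟨co s z - wcmp w (n + es e s) (co s z) + q, ?_, ?_⟩
  · have h1 : n - 1 + es e s = n + es e s - 1 := by ring
    rw [h1]
    exact add_mem (sub_wcmp_mem (hz' s)) hq
  · rw [qmk_eq]
    have : co s z - wcmp w (n + es e s) (co s z) + q - co s (z - koszulDInto g (DE D) k y) =
        -(co s (prC w e n z - koszulDInto g (DE D) k y) - q) := by
      rw [map_sub, map_sub, co_prC]; ring
    rw [this]
    exact neg_mem hqJ


def FCequiv {m : ℕ} (w : Fin m → ℕ) {g : ℕ} (e : Fin g → ℕ) (J : Ideal (MvPolynomial (Fin m) ℂ)) (k : ℕ) (n : ℤ) :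
    FC w e J k n ≃ₗ[ℂ] ((s : Set.powersetCard (Fin g) k) → FJ w J (n + es e s)) where
  toFun z s := ⟨co s z.1, mem_FC.1 z.2 s⟩
  map_add' a b := by ext s; simp
  map_smul' a b := by ext s; simp
  invFun v := ⟨mkc fun s => (v s).1, mem_FC.2 fun s => by rw [co_mkc]; exact (v s).2⟩
  left_inv z := by
    apply Subtype.ext
    apply co_ext
    intro s
    exact co_mkc _ _
  right_inv v := by
    funext s
    apply Subtype.ext
    exact co_mkc _ _

theorem FC_finite {m : ℕ} {w : Fin m → ℕ} (hw : ∀ i, 0 < w i) {g : ℕ} (e : Fin g → ℕ)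
    (J : Ideal (MvPolynomial (Fin m) ℂ)) (k : ℕ) (n : ℤ) : FiniteDimensional ℂ (FC w e J k n) := by
  haveI := fun n => FJ_finite hw J n
  exact Module.Finite.equiv (FCequiv w e J k n).symm

theorem FC_finrank {m : ℕ} {w : Fin m → ℕ} (hw : ∀ i, 0 < w i) {g : ℕ} (e : Fin g → ℕ)
    (J : Ideal (MvPolynomial (Fin m) ℂ)) (k : ℕ) (n : ℤ) :
    Module.finrank ℂ (FC w e J k n) = ∑ s : Set.powersetCard (Fin g) k, Module.finrank ℂ (FJ w J (n + es e s)) := by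
  haveI := fun n => FJ_finite hw J n
  rw [(FCequiv w e J k n).finrank_eq, Module.finrank_pi_fintype]

/-- reduction of cochains with closedness defect in `F_n`. -/
theorem red {m : ℕ} {w : Fin m → ℕ} {g : ℕ} {e : Fin g → ℕ}
    {J : Ideal (MvPolynomial (Fin m) ℂ)}
    {T : Fin g → Module.End ℂ (MvPolynomial (Fin m) ℂ ⧸ J)} (k : ℕ) (N : ℤ)
    (hac : ∀ n : ℤ, N < n → ∀ z ∈ FC w e J k n, koszulD g T k z ∈ FC w e J (k+1) (n-1) →
      ∃ y ∈ FC w e J (k-1) n, z - koszulDInto g T k y ∈ FC w e J k (n-1))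
    (hTc : ∀ i j x, T i (T j x) = T j (T i x))
    (z : KCochain (MvPolynomial (Fin m) ℂ ⧸ J) g k) (hdz : koszulD g T k z ∈ FC w e J (k+1) N) :
    ∃ y, z - koszulDInto g T k y ∈ FC w e J k N := by
  have key : ∀ i : ℕ, ∀ z ∈ FC w e J k (N + i), koszulD g T k z ∈ FC w e J (k+1) N →
      ∃ y, z - koszulDInto g T k y ∈ FC w e J k N := by
    intro i
    induction i with
    | zero => intro z hz _; exact ⟨0, by simpa using hz⟩
    | succ i ih =>
      intro z hz hd
      obtain ⟨y, _, hy'⟩ := hac _ (by push_cast; lia) z hz (FC_mono w e J _ (by push_cast; lia) hd)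
      have h2 : N + ((i+1 : ℕ) : ℤ) - 1 = N + i := by push_cast; ring
      rw [h2] at hy'
      obtain ⟨y', hy''⟩ := ih _ hy' (by rwa [map_sub, koszulD_into T hTc, sub_zero])
      refine ⟨y + y', ?_⟩
      rwa [map_add, ← sub_sub]
  obtain ⟨n, hn⟩ := exists_FC w e J k z
  exact key (n - N).toNat z (FC_mono w e J k (by lia) hn) hdz

theorem KH_rank {V : Type*} [AddCommGroup V] [Module ℂ V] (K B F : Submodule ℂ V) (hB : B ≤ K)
    [FiniteDimensional ℂ F] (h : K ≤ (F ⊓ K) ⊔ B) :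
    FiniteDimensional ℂ (K ⧸ B.comap K.subtype) ∧
    Module.finrank ℂ (K ⧸ B.comap K.subtype) + Module.finrank ℂ ↥(F ⊓ B) = Module.finrank ℂ ↥(F ⊓ K) := by
  haveI : FiniteDimensional ℂ ↥(F ⊓ K) := Submodule.finiteDimensional_of_le inf_le_left
  let ι : ↥(F ⊓ K) →ₗ[ℂ] K := Submodule.inclusion inf_le_right
  let ψ : ↥(F ⊓ K) →ₗ[ℂ] (K ⧸ B.comap K.subtype) := (B.comap K.subtype).mkQ ∘ₗ ι
  have hs : Function.Surjective ψ := by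
    intro q
    obtain ⟨⟨x, hx⟩, rfl⟩ := Submodule.mkQ_surjective _ q
    obtain ⟨a, ha, b, hb, rfl⟩ := Submodule.mem_sup.1 (h hx)
    refine ⟨⟨a, ha⟩, ?_⟩
    show Submodule.Quotient.mk _ = Submodule.Quotient.mk _
    rw [Submodule.Quotient.eq]
    show a - (a + b) ∈ B
    rw [sub_add_cancel_left]
    exact neg_mem hb
  refine ⟨Module.Finite.of_surjective ψ hs, ?_⟩
  have h1 := LinearMap.finrank_range_add_finrank_ker ψ
  rw [LinearMap.range_eq_top.2 hs, finrank_top] at h1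
  rw [← h1]
  congr 1
  have hk : (LinearMap.ker ψ).map (F ⊓ K).subtype = F ⊓ B := by
    ext x
    constructor
    · rintro ⟨⟨y, hy⟩, hy', rfl⟩
      refine ⟨hy.1, ?_⟩
      have : (B.comap K.subtype).mkQ (ι ⟨y, hy⟩) = 0 := hy'
      rw [Submodule.mkQ_apply, Submodule.Quotient.mk_eq_zero] at this
      exact this
    · rintro ⟨hx, hx'⟩
      refine ⟨⟨x, hx, hB hx'⟩, ?_, rfl⟩
      show (B.comap K.subtype).mkQ (ι ⟨x, hx, hB hx'⟩) = 0
      rw [Submodule.mkQ_apply, Submodule.Quotient.mk_eq_zero]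
      exact hx'
  rw [← hk, Submodule.finrank_map_subtype_eq]


theorem euler {m : ℕ} {w : Fin m → ℕ} (hw : ∀ i, 0 < w i) {g : ℕ} {e : Fin g → ℕ}
    (D : Fin g → Derivation ℂ (MvPolynomial (Fin m) ℂ) (MvPolynomial (Fin m) ℂ))
    (hD : ∀ (j : Fin g) (n : ℕ) (x : MvPolynomial (Fin m) ℂ),
      x.IsWeightedHomogeneous w n → (D j x).IsWeightedHomogeneous w (n + e j))
    {J : Ideal (MvPolynomial (Fin m) ℂ)}
    {T : Fin g → Module.End ℂ (MvPolynomial (Fin m) ℂ ⧸ J)}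
    (hT : ∀ j x, T j (qmk J x) = qmk J (D j x)) (N : ℤ)
    (hac : ∀ k, ∀ n : ℤ, N < n → ∀ z ∈ FC w e J k n, koszulD g T k z ∈ FC w e J (k+1) (n-1) →
      ∃ y ∈ FC w e J (k-1) n, z - koszulDInto g T k y ∈ FC w e J k (n-1))
    (hTc : ∀ i j x, T i (T j x) = T j (T i x)) :
    (∀ k, FiniteDimensional ℂ (KoszulH g T k)) ∧
    ∑ k ∈ Finset.range (g + 1), (-1 : ℚ) ^ k * (Module.finrank ℂ (KoszulH g T k) : ℚ) =
    ∑ k ∈ Finset.range (g + 1), (-1 : ℚ) ^ k *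
      ((∑ s : Set.powersetCard (Fin g) k, Module.finrank ℂ (FJ w J (N + es e s)) : ℕ) : ℚ) := by
  haveI := fun k n => FC_finite hw e J k n
  have hB : ∀ k, FC w e J k N ⊓ LinearMap.range (koszulDInto g T k) =
      (FC w e J (k-1) N).map (koszulDInto g T k) := by
    intro k
    apply le_antisymm
    · rintro _ ⟨hx, ⟨u, rfl⟩⟩
      cases k with
      | zero => exact ⟨0, zero_mem _, by simp [koszulDInto]⟩
      | succ k =>
        obtain ⟨y, hy⟩ := red k N (hac k) hTc u hx
        refine ⟨(show KCochain _ g k from u) - koszulDInto g T k y, hy, ?_⟩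
        show koszulD g T k ((show KCochain _ g k from u) - koszulDInto g T k y) = koszulD g T k u
        rw [map_sub, koszulD_into T hTc, sub_zero]
    · rintro _ ⟨u, hu, rfl⟩
      exact ⟨FC_into D hD hT hu, ⟨u, rfl⟩⟩
  have hK : ∀ k, LinearMap.ker (koszulD g T k) ≤
      (FC w e J k N ⊓ LinearMap.ker (koszulD g T k)) ⊔ LinearMap.range (koszulDInto g T k) := by
    intro k z hz
    rw [LinearMap.mem_ker] at hz
    obtain ⟨y, hy⟩ := red k N (hac k) hTc z (by rw [hz]; exact zero_mem _)
    rw [← sub_add_cancel z (koszulDInto g T k y)]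
    refine Submodule.add_mem_sup ⟨hy, ?_⟩ ⟨y, rfl⟩
    rw [SetLike.mem_coe, LinearMap.mem_ker, map_sub, hz, koszulD_into T hTc, sub_zero]
  have hR := fun k => KH_rank (LinearMap.ker (koszulD g T k)) (LinearMap.range (koszulDInto g T k))
    (FC w e J k N) (by rintro _ ⟨u, rfl⟩; exact koszulD_into T hTc u) (hK k)
  refine ⟨fun k => (hR k).1, ?_⟩
  let b : ℕ → ℚ := fun k => Module.finrank ℂ ((FC w e J (k-1) N).map (koszulDInto g T k))
  have hstep : ∀ k, (Module.finrank ℂ (KoszulH g T k) : ℚ) + b k + b (k+1) =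
      ((∑ s : Set.powersetCard (Fin g) k, Module.finrank ℂ (FJ w J (N + es e s)) : ℕ) : ℚ) := by
    intro k
    have h1 := (hR k).2
    rw [hB k] at h1
    have h2 := finrank_map_add (koszulD g T k) (FC w e J k N)
    rw [FC_finrank hw] at h2
    rw [← h2, ← h1]
    show _ + _ + (Module.finrank ℂ ((FC w e J k N).map (koszulD g T k)) : ℚ) = _
    push_cast
    rw [add_comm]
    rfl
  have hsum : ∀ K : ℕ, ∑ k ∈ Finset.range K, (-1 : ℚ) ^ k * (Module.finrank ℂ (KoszulH g T k) : ℚ) =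
    ∑ k ∈ Finset.range K, (-1 : ℚ) ^ k *
      ((∑ s : Set.powersetCard (Fin g) k, Module.finrank ℂ (FJ w J (N + es e s)) : ℕ) : ℚ) + (-1)^K * b K := by
    intro K
    induction K with
    | zero =>
      have : b 0 = 0 := by
        show ((Module.finrank ℂ ((FC w e J (0-1) N).map (0 : KCochain (MvPolynomial (Fin m) ℂ ⧸ J) g (0-1) →ₗ[ℂ] KCochain (MvPolynomial (Fin m) ℂ ⧸ J) g 0)) : ℕ) : ℚ) = 0
        rw [Submodule.map_zero, finrank_bot, Nat.cast_zero]
      simp [this]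
    | succ K ih =>
      rw [Finset.sum_range_succ, Finset.sum_range_succ, ih, ← hstep K]
      ring
  have hlast : b (g+1) = 0 := by
    show ((Module.finrank ℂ ((FC w e J (g+1-1) N).map (koszulDInto g T (g+1))) : ℕ) : ℚ) = 0
    have : (FC w e J (g+1-1) N).map (koszulDInto g T (g+1)) = ⊥ := by
      rw [eq_bot_iff]
      intro x _
      exact (Submodule.mem_bot ℂ).2 (kc_subsingleton (Nat.lt_succ_self g) x)
    rw [this, finrank_bot, Nat.cast_zero]
  rw [hsum, hlast, mul_zero, add_zero]

theorem sum_powersetCard {g : ℕ} (F : Finset (Fin g) → ℚ) :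
    ∑ k ∈ Finset.range (g + 1), (-1 : ℚ) ^ k * ∑ s : Set.powersetCard (Fin g) k, F s.1 =
    ∑ s : Finset (Fin g), (-1 : ℚ)^(s.card) * F s := by
  have h1 : (Finset.univ : Finset (Finset (Fin g))) = (Finset.univ : Finset (Fin g)).powerset := by simp
  rw [h1, Finset.sum_powerset, Finset.card_univ, Fintype.card_fin]
  refine Finset.sum_congr rfl fun k _ => ?_
  rw [Finset.mul_sum]
  refine Finset.sum_bij (fun s _ => s.1) ?_ ?_ ?_ ?_
  · intro s _
    simp only [Finset.mem_powersetCard, Finset.subset_univ, true_and]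
    exact s.2
  · intro s _ t _ h; exact Subtype.ext h
  · intro s hs
    exact ⟨⟨s, (Finset.mem_powersetCard.1 hs).2⟩, Finset.mem_univ _, rfl⟩
  · intro s _
    have : s.1.card = k := s.2
    rw [this]

/-- the alternating sum -/
def uu {m : ℕ} (w : Fin m → ℕ) {g : ℕ} (e : Fin g → ℕ) (J : Ideal (MvPolynomial (Fin m) ℂ)) (n : ℤ) : ℚ :=
  ∑ s : Finset (Fin g), (-1 : ℚ)^(s.card) * (Module.finrank ℂ (FJ w J (n + ∑ i ∈ s, (e i : ℤ))) : ℚ)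

theorem finrank_FJ_eq {m : ℕ} {w : Fin m → ℕ} (hw : ∀ i, 0 < w i) {J I : Ideal (MvPolynomial (Fin m) ℂ)}
    (hG : GrI w J I) (n : ℤ) :
    (Module.finrank ℂ (FJ w J n) : ℚ) = ∑ i ∈ Finset.range (n + 1).toNat, (hI w I i : ℚ) := by
  have key : ∀ k : ℕ, (Module.finrank ℂ (FJ w J ((k : ℤ) - 1)) : ℚ) = ∑ i ∈ Finset.range k, (hI w I i : ℚ) := by
    intro k
    induction k with
    | zero =>
      rw [FJ_neg w J (by simp)]
      simp
    | succ k ih =>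
      rw [Finset.sum_range_succ, ← ih]
      have := FJ_step hw hG (k : ℤ)
      have h2 : ((k+1 : ℕ) : ℤ) - 1 = k := by simp
      rw [h2, this]
      push_cast
      rfl
  by_cases h : n < 0
  · rw [FJ_neg w J h]
    have : (n + 1).toNat = 0 := by lia
    simp [this]
  · rw [← key]
    have : (((n+1).toNat : ℕ) : ℤ) - 1 = n := by lia
    rw [this]

theorem uu_eq {m : ℕ} {w : Fin m → ℕ} (hw : ∀ i, 0 < w i) {g : ℕ} (e : Fin g → ℕ)
    {J I : Ideal (MvPolynomial (Fin m) ℂ)}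
    (hG : GrI w J I) (n : ℤ) : uu w e J n = ∑ s : Finset (Fin g), (-1 : ℚ)^(s.card) *
      ∑ i ∈ Finset.range (n + ∑ i ∈ s, (e i : ℤ) + 1).toNat, (hI w I i : ℚ) := by
  unfold uu
  refine Finset.sum_congr rfl fun s _ => ?_
  rw [finrank_FJ_eq hw hG]

/-- main theorem for an ideal `J` with associated graded ideal `I`. -/
theorem euler' {m : ℕ} {w : Fin m → ℕ} (hw : ∀ i, 0 < w i) {g : ℕ} {e : Fin g → ℕ} (he : ∀ j, 0 < e j)
    (D : Fin g → Derivation ℂ (MvPolynomial (Fin m) ℂ) (MvPolynomial (Fin m) ℂ))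
    (hD : ∀ (j : Fin g) (n : ℕ) (x : MvPolynomial (Fin m) ℂ),
      x.IsWeightedHomogeneous w n → (D j x).IsWeightedHomogeneous w (n + e j))
    (hDc : ∀ i j x, D i (D j x) = D j (D i x))
    {I : Ideal (MvPolynomial (Fin m) ℂ)} (hI : HomI w I) {T : Fin g → Module.End ℂ (MvPolynomial (Fin m) ℂ ⧸ I)}
    (hT : ∀ j x, T j (qmk I x) = qmk I (D j x))
    (hfin : FiniteDimensional ℂ ((MvPolynomial (Fin m) ℂ ⧸ I) ⧸ (⨆ j : Fin g, LinearMap.range (T j)))) :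
    ∃ N : ℕ, ∀ (J : Ideal (MvPolynomial (Fin m) ℂ)) (_ : GrI w J I)
      (TJ : Fin g → Module.End ℂ (MvPolynomial (Fin m) ℂ ⧸ J))
      (_ : ∀ j x, TJ j (qmk J x) = qmk J (D j x)),
      (∀ k, FiniteDimensional ℂ (KoszulH g TJ k)) ∧
      ∀ n : ℤ, N ≤ n →
      ∑ k ∈ Finset.range (g + 1), (-1 : ℚ) ^ k * (Module.finrank ℂ (KoszulH g TJ k) : ℚ) = 
      ∑ s : Finset (Fin g), (-1 : ℚ)^(s.card) *
        ∑ i ∈ Finset.range (n + ∑ i ∈ s, (e i : ℤ) + 1).toNat, (_root_.hI w I i : ℚ) := by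
  choose N hN using fun k => acyc hw he D hD hDc hI hT hfin k
  have hac : ∃ N₀ : ℕ, ∀ n : ℤ, N₀ < n → ∀ k, ∀ z : KCochain (MvPolynomial (Fin m) ℂ) g k, prC w e n z = z →
      (∀ s, co s (koszulD g (DE D) k z) ∈ I) →
      ∃ y, prC w e n y = y ∧ ∀ s, co s (z - koszulDInto g (DE D) k y) ∈ I := by
    refine ⟨∑ k ∈ Finset.range (g+1), N k, fun n hn k => ?_⟩
    by_cases hk : k ≤ g
    · refine hN k n (lt_of_le_of_lt ?_ hn)
      exact_mod_cast Finset.single_le_sum (f := N) (fun _ _ => Nat.zero_le _) (Finset.mem_range.2 (by lia))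
    · intro z _ _
      refine ⟨0, ?_, fun s => ?_⟩
      · apply co_ext; intro s; rw [co_prC, map_zero, map_zero]
      · rw [kc_subsingleton (by lia) z, map_zero, sub_zero, map_zero]
        exact zero_mem _
  obtain ⟨N₀, hN₀⟩ := hac
  refine ⟨N₀, fun J hG TJ hTJ => ?_⟩
  have hTc : ∀ i j x, TJ i (TJ j x) = TJ j (TJ i x) := by
    intro i j x
    obtain ⟨x, rfl⟩ := qmk_surj J x
    simp only [hTJ, hDc i j]
  have hE := fun (n : ℤ) (hn : N₀ ≤ n) => euler hw D hD hTJ n (fun k n' hn' =>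
    facyc D hD hG hTJ k n' (hN₀ n' (by lia) k)) hTc
  refine ⟨(hE N₀ le_rfl).1, fun n hn => ?_⟩
  rw [(hE n hn).2, ← uu_eq hw e hG]
  unfold uu
  rw [← sum_powersetCard (fun s => (Module.finrank ℂ (FJ w J (n + ∑ i ∈ s, (e i : ℤ))) : ℚ))]
  push_cast
  rfl


theorem poly_eval_aux {m g : ℕ} (hg : g ≤ m) (w : Fin m → ℕ) (hw : ∀ i, 0 < w i)
    (d : Fin (m-g) → ℕ) (e : Fin g → ℕ) (P : Polynomial ℚ)
    (h : P * ∏ i, (1 - Polynomial.X ^ w i) =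
      Polynomial.X * (∏ j, (1 - Polynomial.X ^ d j)) * ∏ j, (Polynomial.X ^ e j - 1)) :
    P.eval 1 = (-1 : ℚ) ^ g * ((∏ j, (d j : ℚ)) * ∏ j, (e j : ℚ)) / ∏ i, (w i : ℚ) := by
  let G : ℕ → Polynomial ℚ := fun a => ∑ i ∈ Finset.range a, Polynomial.X ^ i
  have hG : ∀ a, (1 - Polynomial.X ^ a : Polynomial ℚ) = (1 - Polynomial.X) * G a := fun a =>
    (mul_neg_geom_sum Polynomial.X a).symm
  have hG' : ∀ a, (Polynomial.X ^ a - 1 : Polynomial ℚ) = (-1) * ((1 - Polynomial.X) * G a) := fun a => by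
    rw [← hG]; ring
  have hGe : ∀ a, (G a).eval 1 = a := fun a => by
    simp [G, Polynomial.eval_finset_sum]
  simp only [hG', hG] at h
  simp only [Finset.prod_mul_distrib, Finset.prod_const, Finset.card_univ, Fintype.card_fin] at h
  have hX : ((1 - Polynomial.X : Polynomial ℚ))^m ≠ 0 := by
    apply pow_ne_zero
    intro h0
    have := congrArg (Polynomial.eval 0) h0
    simp at this
  have hm : ((1 - Polynomial.X : Polynomial ℚ))^m = (1 - Polynomial.X)^(m-g) * (1 - Polynomial.X)^g := by
    rw [← pow_add, Nat.sub_add_cancel hg]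
  have h2 : P * ∏ i, G (w i) = (-1)^g * (Polynomial.X * (∏ j, G (d j)) * ∏ j, G (e j)) := by
    apply mul_left_cancel₀ hX
    rw [mul_left_comm, h, hm]
    ring
  have h3 := congrArg (Polynomial.eval 1) h2
  simp only [Polynomial.eval_mul, Polynomial.eval_prod, hGe, Polynomial.eval_pow, Polynomial.eval_neg,
    Polynomial.eval_one, Polynomial.eval_X, one_mul] at h3
  have hw0 : (∏ i, (w i : ℚ)) ≠ 0 := Finset.prod_ne_zero_iff.2 fun i _ => by
    have := hw i
    positivity
  rw [eq_div_iff hw0, h3]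

theorem final_eval {m g : ℕ} (hg : g ≤ m) (w : Fin m → ℕ) (hw : ∀ i, 0 < w i)
    (d : Fin (m-g) → ℕ) (e : Fin g → ℕ) (h : ℕ → ℚ) (χ : ℚ) (N : ℕ)
    (hH : PowerSeries.mk h * ∏ i, (1 - PowerSeries.X ^ w i) = ∏ j, (1 - PowerSeries.X ^ d j))
    (hχ : ∀ n : ℤ, N ≤ n → χ = ∑ s : Finset (Fin g), (-1 : ℚ)^(s.card) *
        ∑ i ∈ Finset.range (n + ∑ i ∈ s, (e i : ℤ) + 1).toNat, h i) :
    χ = (-1 : ℚ) ^ g * ((∏ j, (d j : ℚ)) * ∏ j, (e j : ℚ)) / ∏ i, (w i : ℚ) := by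
  classical
  set E := ∑ j, e j with hE
  let S : ℕ → ℚ := fun k => ∑ i ∈ Finset.range k, h i
  let G : PowerSeries ℚ := PowerSeries.mk S
  have hGH : (1 - PowerSeries.X) * G = PowerSeries.X * PowerSeries.mk h := by
    ext n
    rw [sub_mul, one_mul, map_sub]
    cases n with
    | zero => simp [G, S]
    | succ n =>
      rw [PowerSeries.coeff_succ_X_mul, PowerSeries.coeff_succ_X_mul, PowerSeries.coeff_mk,
        PowerSeries.coeff_mk, PowerSeries.coeff_mk]
      simp [S, Finset.sum_range_succ]
  let U : PowerSeries ℚ := G * ∏ j, (PowerSeries.X ^ e j - 1)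
  have hU : ∀ k, N + E + 1 ≤ k → PowerSeries.coeff k U = χ := by
    intro k hk
    have h1 : U = ∑ t : Finset (Fin g), (-1 : ℚ)^(tᶜ.card) • (PowerSeries.X ^ (∑ j ∈ t, e j) * G) := by
      simp only [U, sub_eq_add_neg]
      rw [Finset.prod_add, Finset.mul_sum]
      rw [Finset.powerset_univ]
      refine Finset.sum_congr rfl fun t _ => ?_
      rw [Finset.prod_pow_eq_pow_sum, Finset.prod_const, ← Finset.compl_eq_univ_sdiff, PowerSeries.smul_eq_C_mul]
      simp only [map_pow, map_neg, map_one]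
      ring
    rw [h1, map_sum, hχ ((k : ℤ) - 1 - E) (by lia)]
    refine Finset.sum_bij (fun t _ => tᶜ) (fun _ _ => Finset.mem_univ _)
      (fun a _ b _ hab => compl_injective hab) (fun b _ => ⟨bᶜ, Finset.mem_univ _, compl_compl b⟩) ?_
    intro t _
    rw [PowerSeries.coeff_smul, smul_eq_mul]
    congr 1
    have h2 : E = ∑ j ∈ t, e j + ∑ j ∈ tᶜ, e j := (Finset.sum_add_sum_compl t e).symm
    rw [PowerSeries.coeff_X_pow_mul', if_pos (by lia), PowerSeries.coeff_mk]
    have h3 : ((k : ℤ) - 1 - E + ∑ i ∈ tᶜ, (e i : ℤ) + 1).toNat = k - ∑ j ∈ t, e j := by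
      rw [h2]
      push_cast
      rw [← Nat.cast_sum, ← Nat.cast_sum]
      lia
    rw [h3]
  set K := N + E + 1 with hK
  let P : Polynomial ℚ := (1 - Polynomial.X) * PowerSeries.trunc K U + Polynomial.C χ * Polynomial.X ^ K
  have hP : (P : PowerSeries ℚ) = (1 - PowerSeries.X) * U := by
    have h1 : U = (PowerSeries.trunc K U : PowerSeries ℚ) + PowerSeries.X ^ K * (PowerSeries.C χ * PowerSeries.mk 1) := by
      ext n
      rw [map_add, Polynomial.coeff_coe, PowerSeries.coeff_trunc, PowerSeries.coeff_X_pow_mul']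
      by_cases hn : n < K
      · rw [if_pos hn, if_neg (by lia), add_zero]
      · rw [if_neg hn, if_pos (by lia), zero_add, hU n (by lia)]
        simp
    have h2 : (PowerSeries.mk 1 : PowerSeries ℚ) * (1 - PowerSeries.X) = 1 := PowerSeries.mk_one_mul_one_sub_eq_one ℚ
    conv_rhs => rw [h1]
    have h3 : (1 - PowerSeries.X) * ((PowerSeries.trunc K U : PowerSeries ℚ) + PowerSeries.X ^ K * (PowerSeries.C χ * PowerSeries.mk 1)) =
      (1 - PowerSeries.X) * (PowerSeries.trunc K U : PowerSeries ℚ) + PowerSeries.C χ * PowerSeries.X ^ K * (PowerSeries.mk 1 * (1 - PowerSeries.X)) := by ring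
    rw [h3, h2, mul_one]
    simp [P]
  have hχP : P.eval 1 = χ := by simp [P]
  rw [← hχP]
  apply poly_eval_aux hg w hw d e P
  apply Polynomial.coe_injective ℚ
  have hp : ∀ (n : ℕ) (F : Fin n → Polynomial ℚ), ((∏ i, F i : Polynomial ℚ) : PowerSeries ℚ) = ∏ i, (F i : PowerSeries ℚ) :=
    fun n F => by
      have := map_prod (Polynomial.coeToPowerSeries.ringHom (R := ℚ)) F Finset.univ
      simpa only [Polynomial.coeToPowerSeries.ringHom_apply] using this
  have hs : ∀ F F' : Polynomial ℚ, ((F - F' : Polynomial ℚ) : PowerSeries ℚ) = (F : PowerSeries ℚ) - F' :=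
    fun F F' => map_sub (Polynomial.coeToPowerSeries.ringHom (R := ℚ)) F F'
  simp only [Polynomial.coe_mul, hp, hs, Polynomial.coe_pow, Polynomial.coe_X, Polynomial.coe_one, hP]
  simp only [U]
  rw [← hH, ← mul_assoc, hGH]
  ring


/-- Setup as in the paper: `R = ℂ[a_1,…,a_m]` graded by positive weights
`w`, `g ≤ m`, `f_1,…,f_{m−g}` weighted-homogeneous of positive degrees `d_j` with
`dim R/(f) ≤ g`; `D_1,…,D_g` pairwise commuting ℂ-derivations of `R`, homogeneous of positive
degrees `e_j`, killing the `f_k`; Assumption 1 holds for `A_0 = R/(f_1,…,f_{m−g})` (with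
induced operators `T_j`). Then for every `c ∈ ℂ^{m−g}`, with
`A_c = R/(f_1 − c_1,…,f_{m−g} − c_{m−g})` and induced operators `Tc_j`, each cohomology group
`H^k(C_c^•)` (`0 ≤ k ≤ g`) of the Koszul-type complex on `A_c` is finite-dimensional over ℂ,
and `Σ_k (−1)^k dim H^k(C_c^•) = Σ_k (−1)^k dim H^k(C_0^•)
  = (−1)^g (∏ d_j)(∏ e_j)/(∏ w_i)`. -/
theorem statement10 (m g : ℕ) (hg : g ≤ m) (w : Fin m → ℕ) (hw : ∀ i, 0 < w i)
    (f : Fin (m - g) → MvPolynomial (Fin m) ℂ) (d : Fin (m - g) → ℕ) (hd : ∀ j, 0 < d j)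
    (hf : ∀ j, (f j).IsWeightedHomogeneous w (d j))
    (hdim : ringKrullDim (MvPolynomial (Fin m) ℂ ⧸ Ideal.span (Set.range f)) ≤
      (g : WithBot (WithTop ℕ)))
    (D : Fin g → Derivation ℂ (MvPolynomial (Fin m) ℂ) (MvPolynomial (Fin m) ℂ))
    (e : Fin g → ℕ) (he : ∀ j, 0 < e j)
    (hDhom : ∀ (j : Fin g) (n : ℕ) (x : MvPolynomial (Fin m) ℂ),
      x.IsWeightedHomogeneous w n → (D j x).IsWeightedHomogeneous w (n + e j))
    (hDcomm : ∀ (i j : Fin g) (x : MvPolynomial (Fin m) ℂ), D i (D j x) = D j (D i x))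
    (hDf : ∀ (j : Fin g) (k : Fin (m - g)), D j (f k) = 0)
    (T : Fin g → Module.End ℂ (MvPolynomial (Fin m) ℂ ⧸ Ideal.span (Set.range f)))
    (hT : ∀ (j : Fin g) (x : MvPolynomial (Fin m) ℂ),
      T j (Ideal.Quotient.mk (Ideal.span (Set.range f)) x) =
        Ideal.Quotient.mk (Ideal.span (Set.range f)) (D j x))
    (hfin : FiniteDimensional ℂ
      ((MvPolynomial (Fin m) ℂ ⧸ Ideal.span (Set.range f)) ⧸
        (⨆ j : Fin g, LinearMap.range (T j))))
    (c : Fin (m - g) → ℂ)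
    (Tc : Fin g → Module.End ℂ
      (MvPolynomial (Fin m) ℂ ⧸
        Ideal.span (Set.range fun j : Fin (m - g) => f j - MvPolynomial.C (c j))))
    (hTc : ∀ (j : Fin g) (x : MvPolynomial (Fin m) ℂ),
      Tc j (Ideal.Quotient.mk
          (Ideal.span (Set.range fun j : Fin (m - g) => f j - MvPolynomial.C (c j))) x) =
        Ideal.Quotient.mk
          (Ideal.span (Set.range fun j : Fin (m - g) => f j - MvPolynomial.C (c j)))
          (D j x)) :
    (∀ k ≤ g, FiniteDimensional ℂ (KoszulH g Tc k)) ∧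
      ∑ k ∈ Finset.range (g + 1), (-1 : ℚ) ^ k * (Module.finrank ℂ (KoszulH g Tc k) : ℚ) =
        ∑ k ∈ Finset.range (g + 1), (-1 : ℚ) ^ k * (Module.finrank ℂ (KoszulH g T k) : ℚ) ∧
      ∑ k ∈ Finset.range (g + 1), (-1 : ℚ) ^ k * (Module.finrank ℂ (KoszulH g Tc k) : ℚ) =
        (-1 : ℚ) ^ g * ((∏ j : Fin (m - g), (d j : ℚ)) * ∏ j : Fin g, (e j : ℚ)) /
          ∏ i : Fin m, (w i : ℚ) := by
  have hL : ∀ p ∈ List.ofFn f, ∃ n : ℕ, 0 < n ∧ wcmp w n p = p := by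
    intro p hp
    obtain ⟨j, rfl⟩ := (List.mem_ofFn' f p).1 hp
    exact ⟨d j, hd j, wcmp_self_of_hom (hf j)⟩
  have hspan : ∀ {r : ℕ} (u : Fin r → MvPolynomial (Fin m) ℂ),
      Ideal.ofList (List.ofFn u) = Ideal.span (Set.range u) := by
    intro r u
    unfold Ideal.ofList
    congr 1
    ext p
    exact List.mem_ofFn' u p
  have hreg : RegSeq ⊥ (List.ofFn f) := by
    refine regSeq_f hg hw (List.ofFn f) (by simp) hL ?_
    rw [hspan]
    exact hdim
  have hIhom : HomI w (Ideal.span (Set.range f)) := by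
    have h1 := homI_ofList (List.ofFn f) (fun p hp => by
      obtain ⟨n, _, hn⟩ := hL p hp
      exact ⟨n, hn⟩) ⊥ (homI_bot w)
    rwa [bot_sup_eq, hspan] at h1
  have hGr : GrI w (Ideal.span (Set.range fun j : Fin (m - g) => f j - MvPolynomial.C (c j)))
      (Ideal.span (Set.range f)) := by
    have h1 := grI_list (w := w) (List.ofFn fun j => (f j, c j)) (by
      intro p hp
      obtain ⟨j, rfl⟩ := (List.mem_ofFn' _ p).1 hp
      exact ⟨d j, hd j, wcmp_self_of_hom (hf j)⟩) ⊥ ⊥ (homI_bot w) (grI_self (homI_bot w)) (by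
      rw [List.map_ofFn]
      exact hreg)
    rw [bot_sup_eq, bot_sup_eq, List.map_ofFn, List.map_ofFn, hspan, hspan] at h1
    exact h1
  obtain ⟨N, hN⟩ := euler' hw he D hDhom hDcomm hIhom (T := T) hT hfin
  have h0 := hN _ (grI_self hIhom) T hT
  have hc := hN _ hGr Tc hTc
  refine ⟨fun k _ => hc.1 k, ?_, ?_⟩
  · rw [h0.2 N le_rfl, hc.2 N le_rfl]
  · refine final_eval hg w hw d e (fun n => (hI w (Ideal.span (Set.range f)) n : ℚ)) _ N ?_ hc.2
    exact hs_f hw f d (fun j => wcmp_self_of_hom (hf j)) hreg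


end
end

section
/- Let R = ℂ[a_1,…,a_m] be graded by positive integer weights w_1,…,w_m, let g ≤ m, let f_1,…,f_{m−g} ∈ R be weighted-homogeneous of positive weighted degrees such that the Krull dimension of A_0 = R/(f_1,…,f_{m−g}) is at most g. Let D_1,…,D_g be pairwise commuting ℂ-derivations of R, homogeneous of positive degrees, with D_j f_k = 0 for all j, k. If A_0/(D_1 A_0 + ⋯ + D_g A_0) is finite-dimensional over ℂ (Assumption 1), then R is finitely generated as a module over the commutative ℂ-subalgebra 𝒟_F of End_ℂ(R) generated by the multiplication operators by f_1,…,f_{m−g} together with the derivations D_1,…,D_g. -/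
open MvPolynomial

theorem comp_shift_aux {m : ℕ} (w : Fin m → ℕ) (M : Submodule ℂ (MvPolynomial (Fin m) ℂ))
    (T : MvPolynomial (Fin m) ℂ →ₗ[ℂ] MvPolynomial (Fin m) ℂ) (e : ℕ) (he : 0 < e)
    (hT : ∀ (n : ℕ) (x : MvPolynomial (Fin m) ℂ),
      x.IsWeightedHomogeneous w n → (T x).IsWeightedHomogeneous w (n + e))
    (hM : ∀ x ∈ M, T x ∈ M) (n : ℕ)
    (ih : ∀ i < n, ∀ x, weightedHomogeneousComponent w i x ∈ M) (r : MvPolynomial (Fin m) ℂ) :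
    weightedHomogeneousComponent w n (T r) ∈ M := by
  classical
  have key : ∀ i, weightedHomogeneousComponent w n
      (T (weightedHomogeneousComponent w i r)) ∈ M := by
    intro i
    have h := hT i _ (weightedHomogeneousComponent_isWeightedHomogeneous (w := w) i r)
    by_cases hi : i + e = n
    · subst hi
      rw [h.weightedHomogeneousComponent_same]
      exact hM _ (ih i (by omega) r)
    · rw [h.weightedHomogeneousComponent_ne n (by omega)]
      exact M.zero_mem
  have hr := sum_weightedHomogeneousComponent w r
  rw [← hr, finsum_eq_sum _ (weightedHomogeneousComponent_finsupp r), map_sum, map_sum]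
  exact M.sum_mem fun i _ => key i

/-- With `R = ℂ[a_1,…,a_m]` graded by positive weights, `g ≤ m`,
`f_1,…,f_{m−g}` weighted-homogeneous of positive weighted degrees, `dim R/(f) ≤ g`, and
`D_1,…,D_g` pairwise commuting ℂ-derivations of `R`, homogeneous of positive degrees, with
`D_j f_k = 0`: if `A_0/(D_1A_0 + ⋯ + D_gA_0)` is finite-dimensional over ℂ (Assumption 1),
where `A_0 = R/(f_1,…,f_{m−g})`, then `R` is finitely generated as a module over the
subalgebra `𝒟_F` of `End_ℂ(R)` generated by the multiplication operators by the `f_k`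
together with the derivations `D_j`; i.e. there is a finite set `s ⊆ R` such that the
elements `p x`, `p ∈ 𝒟_F`, `x ∈ s`, span `R` over ℂ. -/
theorem statement11 (m g : ℕ) (hg : g ≤ m) (w : Fin m → ℕ) (hw : ∀ i, 0 < w i)
    (f : Fin (m - g) → MvPolynomial (Fin m) ℂ) (d : Fin (m - g) → ℕ) (hd : ∀ j, 0 < d j)
    (hf : ∀ j, (f j).IsWeightedHomogeneous w (d j))
    (hdim : ringKrullDim (MvPolynomial (Fin m) ℂ ⧸ Ideal.span (Set.range f)) ≤
      (g : WithBot (WithTop ℕ)))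
    (D : Fin g → Derivation ℂ (MvPolynomial (Fin m) ℂ) (MvPolynomial (Fin m) ℂ))
    (e : Fin g → ℕ) (he : ∀ j, 0 < e j)
    (hDhom : ∀ (j : Fin g) (n : ℕ) (x : MvPolynomial (Fin m) ℂ),
      x.IsWeightedHomogeneous w n → (D j x).IsWeightedHomogeneous w (n + e j))
    (hDcomm : ∀ (i j : Fin g) (x : MvPolynomial (Fin m) ℂ), D i (D j x) = D j (D i x))
    (hDf : ∀ (j : Fin g) (k : Fin (m - g)), D j (f k) = 0)
    (hfin : FiniteDimensional ℂ
      ((MvPolynomial (Fin m) ℂ ⧸ Ideal.span (Set.range f)) ⧸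
        (⨆ j : Fin g, Submodule.map
          (Ideal.Quotient.mkₐ ℂ (Ideal.span (Set.range f))).toLinearMap
          (LinearMap.range (D j).toLinearMap)))) :
    ∃ s : Finset (MvPolynomial (Fin m) ℂ),
      Submodule.span ℂ
        { y : MvPolynomial (Fin m) ℂ |
          ∃ p ∈ Algebra.adjoin ℂ
            (Set.range (fun k : Fin (m - g) => LinearMap.mulLeft ℂ (f k)) ∪
              Set.range (fun j : Fin g => (D j).toLinearMap)),
            ∃ x ∈ s, y = p x } = ⊤ := by
  classical
  set I := Ideal.span (Set.range f) with hI
  set N := (⨆ j : Fin g, Submodule.map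
          (Ideal.Quotient.mkₐ ℂ I).toLinearMap
          (LinearMap.range (D j).toLinearMap)) with hN
  let q := N.mkQ ∘ₗ (Ideal.Quotient.mkₐ ℂ I).toLinearMap
  have hq : Function.Surjective q :=
    (Submodule.mkQ_surjective N).comp (Ideal.Quotient.mkₐ_surjective ℂ I)
  obtain ⟨t0, ht0⟩ := hfin.fg_top
  choose l hl using hq
  let t : Finset (MvPolynomial (Fin m) ℂ) := t0.image l
  have hsfin : (⋃ y ∈ (t : Set (MvPolynomial (Fin m) ℂ)),
      Set.range (fun n => weightedHomogeneousComponent w n y)).Finite := by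
    refine Set.Finite.biUnion t.finite_toSet fun y _ => ?_
    have h := weightedHomogeneousComponent_finsupp (w := w) y
    refine ((h.image (fun n => weightedHomogeneousComponent w n y)).union
      (Set.finite_singleton 0)).subset ?_
    rintro _ ⟨n, rfl⟩
    by_cases h0 : weightedHomogeneousComponent w n y = 0
    · right; exact h0
    · left; exact ⟨n, h0, rfl⟩
  refine ⟨hsfin.toFinset, ?_⟩
  set A := Algebra.adjoin ℂ
            (Set.range (fun k : Fin (m - g) => LinearMap.mulLeft ℂ (f k)) ∪
              Set.range (fun j : Fin g => (D j).toLinearMap)) with hA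
  set M := Submodule.span ℂ
        { y : MvPolynomial (Fin m) ℂ | ∃ p ∈ A, ∃ x ∈ hsfin.toFinset, y = p x } with hMdef
  have hMA : ∀ p ∈ A, ∀ x ∈ M, p x ∈ M := by
    intro p hp x hx
    have : M ≤ M.comap p := by
      rw [hMdef, Submodule.span_le]
      rintro _ ⟨p', hp', z, hz, rfl⟩
      exact Submodule.subset_span ⟨p * p', A.mul_mem hp hp', z, hz, rfl⟩
    exact this hx
  have hfA : ∀ k, LinearMap.mulLeft ℂ (f k) ∈ A := fun k =>
    Algebra.subset_adjoin (Or.inl ⟨k, rfl⟩)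
  have hDA : ∀ j, (D j).toLinearMap ∈ A := fun j =>
    Algebra.subset_adjoin (Or.inr ⟨j, rfl⟩)
  have main : ∀ n, ∀ x, weightedHomogeneousComponent w n x ∈ M := by
    intro n
    induction n using Nat.strong_induction_on with
    | _ n ih =>
      let P := M.comap (weightedHomogeneousComponent w n)
      have htP : ∀ y ∈ t, y ∈ P := by
        intro y hy
        refine Submodule.subset_span ⟨1, A.one_mem, weightedHomogeneousComponent w n y, ?_, rfl⟩
        rw [Set.Finite.mem_toFinset]
        exact Set.mem_biUnion (show y ∈ (t : Set _) from hy) ⟨n, rfl⟩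
      have hfP : ∀ k r, f k * r ∈ P := fun k r =>
        comp_shift_aux w M (LinearMap.mulLeft ℂ (f k)) (d k) (hd k)
          (fun i x hx => by
            rw [add_comm]; exact (hf k).mul hx) (hMA _ (hfA k)) n ih r
      have hDP : ∀ j r, D j r ∈ P := fun j r =>
        comp_shift_aux w M (D j).toLinearMap (e j) (he j) (hDhom j) (hMA _ (hDA j)) n ih r
      have hIP : ∀ x ∈ I, x ∈ P := by
        intro x hx
        obtain ⟨c, rfl⟩ := (Ideal.mem_span_range_iff_exists_fun).1 hx
        refine P.sum_mem fun k _ => ?_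
        rw [mul_comm]; exact hfP k _
      have hker : ∀ x, q x = 0 → x ∈ P := by
        intro x hx
        have hx' : (Ideal.Quotient.mkₐ ℂ I).toLinearMap x ∈ N :=
          (Submodule.Quotient.mk_eq_zero N).1 hx
        rw [hN, ← Submodule.map_iSup] at hx'
        obtain ⟨y, hy, hxy⟩ := hx'
        have hyP : y ∈ P := by
          refine (iSup_le fun j => ?_ : (⨆ j, LinearMap.range (D j).toLinearMap) ≤ P) hy
          rintro _ ⟨r, rfl⟩
          exact hDP j r
        have : x - y ∈ I := Ideal.Quotient.eq.1 hxy.symm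
        simpa using P.add_mem (hIP _ this) hyP
      intro x
      have hmem : q x ∈ Submodule.map q P := by
        have : (⊤ : Submodule ℂ _) ≤ Submodule.map q P := by
          rw [← ht0, Submodule.span_le]
          intro z hz
          exact ⟨l z, htP _ (Finset.mem_image_of_mem l hz), hl z⟩
        exact this trivial
      obtain ⟨y, hy, hxy⟩ := hmem
      have h1 := hker (x - y) (by rw [map_sub, hxy, sub_self])
      have h2 : x ∈ P := by simpa using P.add_mem h1 hy
      exact h2
  rw [eq_top_iff]
  intro x _
  rw [← sum_weightedHomogeneousComponent w x,
    finsum_eq_sum _ (weightedHomogeneousComponent_finsupp x)]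
  exact M.sum_mem fun i _ => main i x
end
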